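/- arXiv:1905.12151 — 3 statements merged into one kernel-verified Lean document; each statement's English description precedes it below -/
import Mathlib

section
/- Every 2-regular graph on 24 vertices — that is, every simple graph on a 24-element vertex set in which each vertex has degree exactly 2 — is the leave of some maximum 2-(24,4,1) packing. Equivalently: for every simple graph G on a 24-element point set in which every vertex has degree 2, there exists a collection of 42 four-element subsets (blocks) of the point set such that every pair of distinct points lies in at most one block, and the pairs of points contained in no block are exactly the edges of G. -/
/-!
A 2-regular graph can be oriented along its cycles, so it joins each vertex `v` to `σ v` for a
permutation `σ` without fixed points or 2-cycles. On 24 points the cycle type of `σ` is one of the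
110 partitions of 24 into parts of size at least 3. Conjugate permutations give isomorphic graphs,
so one explicit packing for each of these partitions suffices.

For such a packing it is enough to check that its 42 blocks cover every pair of non-adjacent
points. The ordered pairs inside the blocks and along the edges then number
`42 · 12 + 24 · 2 = 24 · 23`, which is the number of all ordered pairs of distinct points, so no
pair is covered twice and no edge is covered.

The orientation comes from the permutation of the darts that moves a dart `(v, w)` to `(w, x)` with
`x` the neighbour of `w` other than `v`. Reversal of darts conjugates it to its inverse, and no
orbit contains a dart together with its reverse; selecting one orbit from each pair of opposite
orbits gives exactly one selected dart out of, and one into, each vertex.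
-/

/-- A 2-(24,4,1) packing: a collection of 4-element blocks on 24 points such that
every pair of distinct points lies in at most one block. -/
def IsPacking (B : Finset (Finset (Fin 24))) : Prop :=
  (∀ b ∈ B, b.card = 4) ∧
  ∀ p q : Fin 24, p ≠ q → ∀ b₁ ∈ B, ∀ b₂ ∈ B,
    p ∈ b₁ → q ∈ b₁ → p ∈ b₂ → q ∈ b₂ → b₁ = b₂

/-- Adjacency in the leave of a packing: the pair of distinct points is covered by no block. -/
def LeaveAdj (B : Finset (Finset (Fin 24))) (p q : Fin 24) : Prop :=
  p ≠ q ∧ ∀ b ∈ B, ¬ (p ∈ b ∧ q ∈ b)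

/-- The leave of the packing `B` is a vertex-disjoint union of cycles whose lengths are
given by the list `L`, covering all 24 points. -/
def LeaveIsCycleType (B : Finset (Finset (Fin 24))) (L : List ℕ) : Prop :=
  ∃ f : (i : Fin L.length) → ZMod (L.get i) → Fin 24,
    Function.Bijective (fun x : Σ i : Fin L.length, ZMod (L.get i) => f x.1 x.2) ∧
    ∀ p q : Fin 24, LeaveAdj B p q ↔
      ∃ i k, (p = f i k ∧ q = f i (k + 1)) ∨ (q = f i k ∧ p = f i (k + 1))

open Equiv

open scoped Finset

/-! ### Orientations of 2-regular graphs -/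

/-- The graph joining each point to its image under `σ`. The 2-regular graphs are those for which
`σ` has no fixed points and no 2-cycles. -/
def orbitGraph {V : Type*} (σ : Perm V) : SimpleGraph V :=
  SimpleGraph.fromRel fun v w => σ v = w

theorem orbitGraph_adj {V : Type*} {σ : Perm V} {v w : V} :
    (orbitGraph σ).Adj v w ↔ v ≠ w ∧ (σ v = w ∨ σ w = v) :=
  SimpleGraph.fromRel_adj _ _ _

theorem nonempty_orbitGraph_iso_of_isConj {V : Type*} {σ τ : Perm V} (h : IsConj σ τ) :
    Nonempty (orbitGraph σ ≃g orbitGraph τ) := by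
  obtain ⟨c, rfl⟩ := isConj_iff.1 h
  exact ⟨⟨c, by simp [orbitGraph_adj]⟩⟩

section Reversal

variable {X : Type*} {ρ s : Perm X}

theorem not_sameCycle_of_semiconjBy_inv (h : SemiconjBy s ρ ρ⁻¹) (hs : ∀ x, s x ≠ x)
    (hρ : ∀ x, s x ≠ ρ x) (x : X) : ¬ ρ.SameCycle x (s x) := by
  have s_zpow (m : ℤ) : s ((ρ ^ m) x) = (ρ ^ (-m)) (s x) := by
    simpa using Perm.congr_fun (h.zpow_right m) x
  rintro ⟨k, hk⟩
  obtain ⟨m, rfl | rfl⟩ := Int.even_or_odd' k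
  -- If `s x = ρ ^ (2 m) x`, then `s` fixes the midpoint `ρ ^ m x`.
  · apply hs ((ρ ^ m) x)
    rw [s_zpow, ← hk, ← Perm.mul_apply, ← zpow_add]
    congr 2
    ring
  -- If `s x = ρ ^ (2 m + 1) x`, then `s` and `ρ` agree on `ρ ^ m x`.
  · apply hρ ((ρ ^ m) x)
    rw [s_zpow, ← hk, ← Perm.mul_apply, ← zpow_add, ← Perm.mul_apply, ← zpow_one_add]
    congr 2
    ring

theorem exists_invariant_set_of_semiconjBy_inv (h : SemiconjBy s ρ ρ⁻¹)
    (hs : Function.Involutive s) (hρ : ∀ x, ¬ ρ.SameCycle x (s x)) :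
    ∃ S : Set X, (∀ x, ρ x ∈ S ↔ x ∈ S) ∧ ∀ x, s x ∈ S ↔ x ∉ S := by
  let cycle (x : X) : Quotient (Perm.SameCycle.setoid ρ) := ⟦x⟧
  -- A linear order on the cycles picks the smaller of any two cycles exchanged by `s`.
  obtain ⟨_, -⟩ := exists_wellFoundedLT (Quotient (Perm.SameCycle.setoid ρ))
  have cycle_apply (x : X) : cycle (ρ x) = cycle x :=
    Quotient.sound (Perm.sameCycle_apply_left.2 (Perm.SameCycle.refl ρ x))
  have cycle_s_apply (x : X) : cycle (s (ρ x)) = cycle (s x) := by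
    rw [← cycle_apply (s (ρ x)), show s (ρ x) = ρ⁻¹ (s x) from Perm.congr_fun h x,
      Perm.inv_def, ρ.apply_symm_apply]
  have cycle_ne (x : X) : cycle x ≠ cycle (s x) := fun he => hρ x (Quotient.exact he)
  refine ⟨{x | cycle x < cycle (s x)}, fun x => ?_, fun x => ?_⟩
  · simp only [Set.mem_ofPred_eq, cycle_apply, cycle_s_apply]
  · simp only [Set.mem_ofPred_eq, hs x, not_lt]
    exact (cycle_ne x).symm.le_iff_lt.symm

end Reversal

section TwoRegular

variable {V : Type*} {G : SimpleGraph V}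

theorem existsUnique_dart_fst_ne (hG : ∀ v, (G.neighborSet v).ncard = 2) (d : G.Dart) :
    ∃! e : G.Dart, e.fst = d.fst ∧ e ≠ d := by
  have hcycles : G.IsCycles := fun v _ => hG v
  obtain ⟨w, ⟨hw, hadj⟩, huniq⟩ := hcycles.existsUnique_ne_adj d.adj
  refine ⟨⟨(d.fst, w), hadj⟩, ⟨rfl, fun h => hw (congrArg (·.snd) h).symm⟩, ?_⟩
  rintro ⟨⟨v, x⟩, hx⟩ ⟨rfl, hne⟩
  have hxw : x = w := huniq x ⟨fun h => hne (SimpleGraph.Dart.ext _ _ (Prod.ext rfl h.symm)), hx⟩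
  subst hxw
  rfl

/-- The other dart with the same tail, in a 2-regular graph. -/
noncomputable def otherDart (hG : ∀ v, (G.neighborSet v).ncard = 2) (d : G.Dart) : G.Dart :=
  (existsUnique_dart_fst_ne hG d).choose

variable (hG : ∀ v, (G.neighborSet v).ncard = 2)

theorem otherDart_fst (d : G.Dart) : (otherDart hG d).fst = d.fst :=
  (existsUnique_dart_fst_ne hG d).choose_spec.1.1

theorem otherDart_ne (d : G.Dart) : otherDart hG d ≠ d :=
  (existsUnique_dart_fst_ne hG d).choose_spec.1.2

theorem eq_or_eq_otherDart {d e : G.Dart} (h : e.fst = d.fst) : e = d ∨ e = otherDart hG d :=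
  or_iff_not_imp_left.2 fun hne => (existsUnique_dart_fst_ne hG d).choose_spec.2 e ⟨h, hne⟩

theorem otherDart_involutive : Function.Involutive (otherDart hG) := fun d =>
  ((eq_or_eq_otherDart hG (otherDart_fst hG d).symm).resolve_left (otherDart_ne hG d).symm).symm

theorem exists_dart_fst {v : V} (hv : (G.neighborSet v).ncard = 2) : ∃ d : G.Dart, d.fst = v := by
  obtain ⟨w, hw⟩ : (G.neighborSet v).Nonempty :=
    Set.nonempty_of_ncard_ne_zero (by rw [hv]; exact two_ne_zero)
  exact ⟨⟨(v, w), hw⟩, rfl⟩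

theorem exists_orientation :
    ∃ S : Set G.Dart, (∀ d, d.symm ∈ S ↔ d ∉ S) ∧ ∀ d, otherDart hG d ∈ S ↔ d ∉ S := by
  let s : Perm G.Dart := SimpleGraph.Dart.symm_involutive.toPerm
  let t : Perm G.Dart := (otherDart_involutive hG).toPerm
  have hs : s * s = 1 := Equiv.ext SimpleGraph.Dart.symm_involutive
  have ht : t * t = 1 := Equiv.ext (otherDart_involutive hG)
  -- `t * s` moves a dart one step along its cycle, and `s` reverses the direction of travel.
  have hsemi : SemiconjBy s (t * s) (t * s)⁻¹ := by
    rw [SemiconjBy, mul_inv_rev, ← eq_inv_of_mul_eq_one_left hs, ← eq_inv_of_mul_eq_one_left ht,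
      mul_assoc]
  have hts (d : G.Dart) : s d ≠ (t * s) d := (otherDart_ne hG d.symm).symm
  obtain ⟨S, hstep, hrev⟩ := exists_invariant_set_of_semiconjBy_inv hsemi
    SimpleGraph.Dart.symm_involutive
    (not_sameCycle_of_semiconjBy_inv hsemi SimpleGraph.Dart.symm_ne hts)
  refine ⟨S, hrev, fun d => ?_⟩
  rw [← show d.symm ∈ S ↔ d ∉ S from hrev d, ← hstep d.symm]
  exact iff_of_eq (congrArg (otherDart hG · ∈ S) d.symm_symm.symm)

theorem existsUnique_mem_fst_eq {S : Set G.Dart} (hS : ∀ d, otherDart hG d ∈ S ↔ d ∉ S) (v : V) :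
    ∃! d : S, d.1.fst = v := by
  obtain ⟨d, rfl⟩ := exists_dart_fst (hG v)
  by_cases hd : d ∈ S
  · refine ⟨⟨d, hd⟩, rfl, fun e he => Subtype.ext ?_⟩
    refine (eq_or_eq_otherDart hG he).resolve_right fun h => ?_
    exact (hS d).1 (h ▸ e.2) hd
  · refine ⟨⟨otherDart hG d, (hS d).2 hd⟩, otherDart_fst hG d, fun e he => Subtype.ext ?_⟩
    exact (eq_or_eq_otherDart hG he).resolve_left fun h => hd (h ▸ e.2)

theorem existsUnique_mem_snd_eq {S : Set G.Dart} (hsymm : ∀ d, d.symm ∈ S ↔ d ∉ S)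
    (hS : ∀ d, otherDart hG d ∈ S ↔ d ∉ S) (v : V) : ∃! d : S, d.1.snd = v := by
  obtain ⟨d, rfl, huniq⟩ := existsUnique_mem_fst_eq hG (S := Sᶜ) (fun d => not_congr (hS d)) v
  refine ⟨⟨d.1.symm, (hsymm d).2 d.2⟩, rfl, fun e he => Subtype.ext ?_⟩
  have he' : e.1.symm ∈ Sᶜ := fun h => (hsymm e).1 h e.2
  rw [← e.1.symm_symm]
  exact congrArg (fun x => x.1.symm) (huniq ⟨e.1.symm, he'⟩ he)

end TwoRegular

theorem exists_eq_orbitGraph {V : Type*} {G : SimpleGraph V}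
    (hG : ∀ v, (G.neighborSet v).ncard = 2) :
    ∃ σ : Perm V, G = orbitGraph σ ∧ ∀ v, σ (σ v) ≠ v := by
  obtain ⟨S, hsymm, hother⟩ := exists_orientation hG
  let tail : S ≃ V := .ofBijective (fun d => d.1.fst)
    ((Function.bijective_iff_existsUnique _).2 (existsUnique_mem_fst_eq hG hother))
  let head : S ≃ V := .ofBijective (fun d => d.1.snd)
    ((Function.bijective_iff_existsUnique _).2 (existsUnique_mem_snd_eq hG hsymm hother))
  have apply_eq_iff (v w : V) :
      (tail.symm.trans head) v = w ↔ ∃ h : G.Adj v w, (⟨(v, w), h⟩ : G.Dart) ∈ S := by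
    constructor
    · rintro rfl
      obtain ⟨d, rfl⟩ := tail.surjective v
      simp only [Equiv.trans_apply, Equiv.symm_apply_apply]
      exact ⟨d.1.adj, d.2⟩
    · rintro ⟨h, hd⟩
      have htail : tail.symm v = ⟨_, hd⟩ := tail.symm_apply_eq.2 rfl
      rw [Equiv.trans_apply, htail]
      rfl
  refine ⟨tail.symm.trans head, SimpleGraph.ext ?_, fun v hv => ?_⟩
  · ext v w
    rw [orbitGraph_adj, apply_eq_iff, apply_eq_iff]
    refine ⟨fun h => ⟨h.ne, ?_⟩, ?_⟩
    · by_cases hd : (⟨(v, w), h⟩ : G.Dart) ∈ S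
      · exact Or.inl ⟨h, hd⟩
      · exact Or.inr ⟨h.symm, (hsymm _).2 hd⟩
    · rintro ⟨-, ⟨h, -⟩ | ⟨h, -⟩⟩
      exacts [h, h.symm]
  · obtain ⟨h, hd⟩ := (apply_eq_iff v _).1 rfl
    obtain ⟨_, hd'⟩ := (apply_eq_iff _ v).1 hv
    exact (hsymm ⟨(v, _), h⟩).1 hd' hd

/-! ### Permutations with a given cycle type -/

section CycleType

variable {α : Type*} [Fintype α] [DecidableEq α]

theorem sum_cycleType_of_apply_ne {σ : Perm α} (h : ∀ v, σ v ≠ v) :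
    σ.cycleType.sum = Fintype.card α := by
  rw [Perm.sum_cycleType, ← Finset.card_univ]
  exact congrArg _ (Finset.eq_univ_of_forall fun v => Perm.mem_support.2 (h v))

theorem three_le_of_mem_cycleType {σ : Perm α} (h : ∀ v, σ (σ v) ≠ v) {a : ℕ}
    (ha : a ∈ σ.cycleType) : 3 ≤ a := by
  obtain ⟨c, τ, rfl, hdisj, hc, rfl⟩ := Perm.mem_cycleType_iff.1 ha
  refine hc.two_le_card_support.lt_of_ne fun hcard => ?_
  obtain ⟨x, hx⟩ := hc.nonempty_support
  refine h x ?_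
  have hτx : τ x = x := (hdisj x).resolve_left (Perm.mem_support.1 hx)
  have hτcx : τ (c x) = c x :=
    (hdisj (c x)).resolve_left (Perm.mem_support.1 (Perm.apply_mem_support.2 hx))
  have hsq : c ^ 2 = 1 := by rw [hcard, ← hc.orderOf, pow_orderOf_eq_one]
  rw [Perm.mul_apply, Perm.mul_apply, hτx, hτcx, ← Perm.mul_apply, ← sq, hsq, Perm.one_apply]

theorem cycleType_prod_formPerm {ls : List (List α)} (hnodup : ls.flatten.Nodup)
    (hlen : ∀ l ∈ ls, 2 ≤ l.length) :
    (ls.map List.formPerm).prod.cycleType = ls.map List.length := by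
  obtain ⟨hnd, hdisj⟩ := List.nodup_flatten.1 hnodup
  rw [Perm.cycleType_eq (ls.map List.formPerm) rfl, List.map_map]
  · refine congrArg _ (List.map_congr_left fun l hl => ?_)
    have hne (x : α) : l ≠ [x] := by
      rintro rfl
      exact absurd (hlen _ hl) (by simp)
    rw [Function.comp_apply, Function.comp_apply, List.support_formPerm_of_nodup l (hnd l hl) hne,
      List.toFinset_card_of_nodup (hnd l hl)]
  · simp only [List.mem_map]
    rintro _ ⟨l, hl, rfl⟩
    exact List.isCycle_formPerm (hnd l hl) (hlen l hl)
  · refine List.pairwise_map.2 (hdisj.imp_of_mem fun ha hb hab => ?_)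
    exact (List.formPerm_disjoint_iff (hnd _ ha) (hnd _ hb) (hlen _ ha) (hlen _ hb)).2 hab

end CycleType

/-- The permutation of `Fin n` that cuts `0, …, n - 1` into consecutive intervals of the lengths in
`L` and rotates each of them; points beyond the last interval are fixed. -/
def rotateIntervals (n : ℕ) (L : List ℕ) : Perm (Fin n) :=
  ((L.splitLengths (List.finRange n)).map List.formPerm).prod

theorem cycleType_rotateIntervals {n : ℕ} {L : List ℕ} (hsum : L.sum = n) (hL : ∀ a ∈ L, 2 ≤ a) :
    (rotateIntervals n L).cycleType = L := by
  have hlen : (L.splitLengths (List.finRange n)).map List.length = L :=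
    List.map_splitLengths_length _ _ (by simp [hsum])
  have hflat : (L.splitLengths (List.finRange n)).flatten = List.finRange n :=
    List.flatten_splitLengths _ _ (by simp [hsum])
  rw [rotateIntervals, cycleType_prod_formPerm, hlen]
  · rw [hflat]
    exact List.nodup_finRange n
  · intro l hl
    exact hL _ (hlen ▸ List.mem_map_of_mem hl)

/-! ### Partitions into large parts -/

/-- The nondecreasing lists of `k` numbers, all at least `m`, with sum `n`. -/
def partitionsInto : ℕ → ℕ → ℕ → List (List ℕ)
  | 0, n, _ => if n = 0 then [[]] else []
  | k + 1, n, m =>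
    (List.range' m (n + 1 - m)).flatMap fun a => (partitionsInto k (n - a) a).map (a :: ·)

theorem mem_partitionsInto {L : List ℕ} (hL : L.Pairwise (· ≤ ·)) {m : ℕ} (hm : ∀ a ∈ L, m ≤ a) :
    L ∈ partitionsInto L.length L.sum m := by
  induction L generalizing m with
  | nil => simp [partitionsInto]
  | cons a L ih =>
    obtain ⟨ha, hL⟩ := List.pairwise_cons.1 hL
    have hma : m ≤ a := hm a List.mem_cons_self
    simp only [partitionsInto, List.length_cons, List.sum_cons, List.mem_flatMap,
      List.mem_range'_1, List.mem_map]
    refine ⟨a, by lia, L, ?_, rfl⟩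
    rw [Nat.add_sub_cancel_left]
    exact ih hL ha

/-! ### Coverings of the complement of a graph -/

/-- Every edge of the complement of `G` lies in a block of `B`. Unlike in a packing with leave `G`,
blocks may share several points and may contain edges of `G`. -/
def CoversCompl {V : Type*} (G : SimpleGraph V) (B : Finset (Finset V)) : Prop :=
  ∀ p q, p ≠ q → ¬ G.Adj p q → ∃ b ∈ B, p ∈ b ∧ q ∈ b

theorem CoversCompl.image_iso {V W : Type*} [DecidableEq W] {G : SimpleGraph V}
    {H : SimpleGraph W} {B : Finset (Finset V)} (hB : CoversCompl G B) (φ : G ≃g H) :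
    CoversCompl H (B.image (Finset.map φ.toEquiv.toEmbedding)) := by
  intro p q hpq hadj
  obtain ⟨p, rfl⟩ := φ.surjective p
  obtain ⟨q, rfl⟩ := φ.surjective q
  obtain ⟨b, hb, hp, hq⟩ := hB p q (ne_of_apply_ne φ hpq) (mt φ.map_adj_iff.2 hadj)
  exact ⟨_, Finset.mem_image_of_mem _ hb, Finset.mem_map_of_mem _ hp, Finset.mem_map_of_mem _ hq⟩

section Counting

variable {V : Type*} [Fintype V]

theorem sum_offDiag_card_filter_mem [DecidableEq V] (B : Finset (Finset V)) :
    ∑ x ∈ (Finset.univ : Finset V).offDiag, #{b ∈ B | x.1 ∈ b ∧ x.2 ∈ b} =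
      ∑ b ∈ B, #b.offDiag := by
  refine (Finset.sum_card_bipartiteAbove_eq_sum_card_bipartiteBelow
    fun (x : V × V) (b : Finset V) => x.1 ∈ b ∧ x.2 ∈ b).trans ?_
  refine Finset.sum_congr rfl fun b _ => congrArg _ ?_
  ext x
  simp only [Finset.mem_bipartiteBelow, Finset.mem_offDiag, Finset.mem_univ, true_and]
  tauto

theorem sum_offDiag_ite_adj (G : SimpleGraph V) [DecidableRel G.Adj] :
    ∑ x ∈ (Finset.univ : Finset V).offDiag, (if G.Adj x.1 x.2 then 1 else 0) =
      ∑ v, G.degree v := by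
  have hdeg (v : V) : G.degree v = ∑ w, if G.Adj v w then 1 else 0 := by
    rw [← Finset.card_filter, ← G.neighborFinset_eq_filter, G.card_neighborFinset_eq_degree]
  simp only [hdeg]
  rw [← Fintype.sum_prod_type' fun v w => if G.Adj v w then 1 else 0]
  refine Finset.sum_subset (Finset.subset_univ _) fun x _ hx => if_neg fun h => hx ?_
  exact Finset.mem_offDiag.2 ⟨Finset.mem_univ _, Finset.mem_univ _, h.ne⟩

variable {G : SimpleGraph V} [DecidableRel G.Adj] {B : Finset (Finset V)}

theorem CoversCompl.one_le_card_filter_mem_add_ite [DecidableEq V] (hB : CoversCompl G B) :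
    ∀ x ∈ (Finset.univ : Finset V).offDiag,
      1 ≤ #{b ∈ B | x.1 ∈ b ∧ x.2 ∈ b} + if G.Adj x.1 x.2 then 1 else 0 := by
  intro x hx
  by_cases hadj : G.Adj x.1 x.2
  · rw [if_pos hadj]
    exact Nat.le_add_left 1 _
  · obtain ⟨b, hb, hmem⟩ := hB x.1 x.2 (Finset.mem_offDiag.1 hx).2.2 hadj
    exact le_add_right (Finset.card_pos.2 ⟨b, Finset.mem_filter.2 ⟨hb, hmem⟩⟩)

theorem CoversCompl.card_offDiag_le (hB : CoversCompl G B) :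
    #(Finset.univ : Finset V).offDiag ≤ ∑ b ∈ B, #b.offDiag + ∑ v, G.degree v := by
  classical
  rw [← sum_offDiag_card_filter_mem, ← sum_offDiag_ite_adj, ← Finset.sum_add_distrib,
    Finset.card_eq_sum_ones]
  exact Finset.sum_le_sum hB.one_le_card_filter_mem_add_ite

theorem CoversCompl.card_filter_mem_eq_ite [DecidableEq V] (hB : CoversCompl G B)
    (hcard : ∑ b ∈ B, #b.offDiag + ∑ v, G.degree v ≤ #(Finset.univ : Finset V).offDiag)
    {p q : V} (hpq : p ≠ q) :
    #{b ∈ B | p ∈ b ∧ q ∈ b} = if G.Adj p q then 0 else 1 := by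
  have heq := hB.card_offDiag_le.antisymm hcard
  rw [← sum_offDiag_card_filter_mem, ← sum_offDiag_ite_adj, ← Finset.sum_add_distrib,
    Finset.card_eq_sum_ones, Finset.sum_eq_sum_iff_of_le hB.one_le_card_filter_mem_add_ite] at heq
  have hone := heq (p, q) (Finset.mem_offDiag.2 ⟨Finset.mem_univ _, Finset.mem_univ _, hpq⟩)
  split_ifs at hone ⊢ <;> lia

end Counting

/-! ### The tabulated coverings -/

/-- The set of points encoded by the bit mask `m`. Bits are read off by division because the kernel
evaluates this faster than `Nat.testBit`. -/
def pointSet (n m : ℕ) : Finset (Fin n) := {i | m / 2 ^ (i : ℕ) % 2 = 1}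

theorem mem_pointSet {n m : ℕ} {i : Fin n} : i ∈ pointSet n m ↔ m.testBit i := by
  rw [pointSet, Finset.mem_filter_univ, Nat.testBit_eq_decide_div_mod_eq, decide_eq_true_iff]

/-- The bit mask of the union of those blocks in `l` that contain the point `i`. -/
def starMask (l : List ℕ) (i : ℕ) : ℕ :=
  (l.filter fun m => m / 2 ^ i % 2 = 1).foldr (· ||| ·) 0

theorem testBit_foldr_lor {l : List ℕ} {j : ℕ} :
    (l.foldr (· ||| ·) 0).testBit j ↔ ∃ m ∈ l, m.testBit j := by
  induction l with
  | nil => simp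
  | cons m l ih => simp [ih]

theorem testBit_starMask {l : List ℕ} {i j : ℕ} :
    (starMask l i).testBit j ↔ ∃ m ∈ l, m.testBit i ∧ m.testBit j := by
  rw [starMask, testBit_foldr_lor]
  simp only [List.mem_filter, ← Nat.testBit_eq_decide_div_mod_eq, and_assoc]

set_option maxRecDepth 20000 in
/-- For each partition of 24 into parts of size at least 3, the blocks of a maximum packing whose
leave has cycles of these lengths on consecutive intervals of points. A block is encoded as the
sum of `2 ^ i` over its points `i`. The blocks were found by computer search. -/
def table : List (List ℕ × List ℕ) := [
  ([3, 3, 3, 3, 3, 3, 3, 3],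
    [139524, 8914960, 69762, 5243912, 49217, 2359840, 16914, 34976, 1196064, 4235776, 1048721,
     3153922, 4196418, 4587648, 10249, 132176, 335888, 2234368, 280832, 655873, 2129940, 8396896,
     533632, 1116164, 4198672, 8519690, 295938, 1053248, 2113672, 4259873, 524578, 4734980,
     8389252, 9470208, 5156, 66312, 561160, 8471552, 262220, 2098433, 2687040, 8654849]),
  ([3, 3, 3, 3, 3, 3, 6],
    [6276, 33044, 43016, 658, 73745, 140416, 1312784, 4464644, 5275776, 344192, 1056802, 4195408,
     533248, 2232336, 8388745, 2621600, 8929296, 10494016, 655428, 2115585, 8421920, 17444, 49218,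
     67680, 2393088, 4720642, 9502724, 561153, 2097676, 8521984, 590856, 2162946, 8393730, 393226,
     1049857, 4264448, 266528, 1052744, 4210952, 262721, 1196544, 4325409]),
  ([3, 3, 3, 3, 3, 4, 5],
    [8390674, 331904, 8553472, 16457, 8397568, 4718628, 9437320, 10489857, 8454212, 8667168, 4372,
     8354, 1053728, 2098308, 67617, 264204, 1187844, 2130208, 49668, 131680, 524929, 4198920,
     661504, 4229248, 36930, 147600, 1081361, 2228234, 1067264, 2107456, 565256, 4325633, 66824,
     271361, 2703360, 5505088, 786690, 4268048, 1114626, 2359824, 525392, 4211714]),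
  ([3, 3, 3, 3, 3, 9],
    [132162, 1049729, 8389185, 1181712, 8519968, 9437196, 1122368, 4333569, 8922112, 10500, 41120,
     270864, 2105354, 135688, 1052706, 8392848, 180228, 1327360, 10504192, 2752640, 5276160,
     8716290, 17026, 559106, 2163456, 4456580, 67720, 524836, 4194578, 4788224, 66580, 524553,
     4196448, 81953, 540752, 4211720, 294984, 2129937, 2360352, 38144, 268289, 2101316]),
  ([3, 3, 3, 3, 4, 4, 4],
    [10486786, 5243168, 649, 2132, 9249, 17154, 165120, 266274, 8388881, 8389216, 69896, 557216,
     84000, 532740, 2228260, 2361600, 2101392, 2129992, 2171392, 2637825, 8486916, 8919040,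
     4198916, 4229121, 21568, 40978, 1183745, 1344000, 327745, 655888, 4333632, 4472848, 1115152,
     1572930, 4259970, 4719624, 133130, 263300, 1058944, 1064972, 8536192, 8658952]),
  ([3, 3, 3, 3, 4, 8],
    [8481, 8683552, 4727296, 41026, 33412, 21024, 2360064, 9437697, 66128, 131594, 1081608,
     2129937, 690176, 4293632, 67842, 132161, 589860, 4325536, 1050720, 2098210, 524425, 4194580,
     344065, 8536320, 529664, 4200449, 2637888, 5259266, 4456520, 8912914, 266370, 8392772,
     1122432, 2236420, 1183760, 2166792, 1311748, 10487936, 272400, 8397832, 17552, 18444]),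
  ([3, 3, 3, 3, 5, 7],
    [2114056, 11010112, 2098193, 18465, 5259328, 41025, 4180, 66626, 131680, 264264, 606212,
     8409090, 148608, 278800, 2101536, 2164864, 2236420, 2392066, 169984, 335904, 1048738,
     4196612, 4751392, 9447424, 526354, 8389668, 1245200, 4461568, 1311236, 4325386, 8962, 32908,
     1082624, 4202640, 533512, 8421904, 655617, 8650881, 529024, 8454408, 1052681, 4260353]),
  ([3, 3, 3, 3, 6, 6],
    [9438209, 147744, 4718728, 2132, 2396160, 74242, 81929, 140416, 262289, 2098248, 565264,
     4264000, 1114384, 8396896, 328736, 2105601, 2689024, 4464644, 1058824, 8454276, 264450,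
     2097700, 393736, 2113666, 1327168, 10616848, 1212420, 8411136, 4364, 34976, 5242914, 8913664,
     1053312, 8421386, 528417, 4228352, 655426, 4211216, 541700, 4327425, 5138, 33345]),
  ([3, 3, 3, 3, 12],
    [4673, 66308, 1049668, 593922, 1087488, 9502848, 20752, 328720, 5242897, 266276, 1065504,
     4259936, 73737, 1179912, 2102280, 1318914, 2181120, 4329600, 278657, 4211714, 4458752,
     294984, 4719112, 8405004, 2186, 671808, 4235268, 10748416, 8848, 133140, 2097234, 8945680,
     164354, 2621572, 8398912, 33952, 526369, 8388898, 533760, 2130177, 8520705, 2236448]),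
  ([3, 3, 3, 4, 4, 7],
    [10520576, 8964, 4211720, 4194450, 4263968, 1179713, 4849668, 5505280, 4196928, 4235265,
     329732, 561408, 2321, 32852, 2097292, 8388874, 141320, 1081864, 266249, 589896, 164992,
     1067010, 294946, 526496, 2163968, 8409092, 197122, 1060992, 2232336, 9502736, 5186, 82049,
     147744, 1049636, 2375744, 8913921, 2097697, 8396896, 2629634, 8651392, 271376, 541200]),
  ([3, 3, 3, 4, 5, 6],
    [147473, 8458, 2367616, 8292, 566272, 1124352, 4206593, 8397328, 4196372, 8389665, 589953,
     1081488, 524370, 1048649, 263440, 2099457, 295425, 2166800, 4358152, 8470530, 4260928,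
     8423488, 37124, 66336, 327692, 2129954, 4735232, 9568512, 4194946, 8392840, 659488, 1065476,
     282688, 2228800, 18592, 132228, 526856, 1053698, 395266, 2114568, 5505056, 11010052]),
  ([3, 3, 3, 4, 11],
    [262217, 5324800, 657920, 2135040, 34849, 2097681, 73857, 9437441, 541697, 4329473, 66060,
     1050634, 20744, 4195464, 2236424, 8945672, 67856, 1049248, 4466688, 8667648, 18500, 4194882,
     41728, 10487936, 2113570, 4227092, 1212480, 2687040, 295042, 2359556, 132354, 528516,
     1057796, 8458242, 532498, 8519716, 328736, 1314832, 12384, 8389712, 147600, 4718880]),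
  ([3, 3, 3, 5, 5, 5],
    [135328, 1049730, 4210722, 263204, 2228482, 4196496, 656392, 4228160, 4333569, 164368,
     4784132, 8398080, 2163728, 4457216, 8521732, 21505, 1196096, 5246984, 24596, 528656, 1081604,
     18696, 1310737, 2101316, 652, 65825, 8388690, 70146, 8470656, 9437728, 1124352, 2638336,
     8687616, 2625, 327752, 10485769, 40970, 532576, 557185, 788482, 2132000, 2367616]),
  ([3, 3, 3, 5, 10],
    [8356, 524564, 4276228, 548866, 1327105, 8265, 8425984, 2752513, 2817, 5137, 4227105, 8454273,
     559168, 8913928, 593952, 4719232, 17696, 18576, 151560, 2114112, 266308, 1049100, 2130948,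
     8521732, 131618, 2101378, 328208, 5247232, 295048, 9437280, 1180800, 2361376, 2162952,
     4325456, 66626, 4196362, 1124352, 4465664, 172288, 10493968, 1081362, 8651010]),
  ([3, 3, 3, 6, 9],
    [135440, 1064978, 8389890, 66580, 528514, 4210952, 53312, 279584, 2102273, 606209, 4263968,
     4719680, 1090560, 2246656, 8655360, 132232, 1052684, 8405124, 5373953, 9044000, 9502784,
     164356, 1312896, 10493960, 139330, 1049376, 8390673, 585, 2148, 8353, 295169, 2129954,
     2359376, 559112, 2163328, 4464644, 76032, 533008, 4196866, 327690, 2621700, 4227216]),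
  ([3, 3, 3, 7, 8],
    [2359456, 20752, 34888, 4333572, 83972, 8425476, 524436, 1048868, 263180, 2097732, 278593,
     2101258, 2245632, 4461056, 69761, 8405026, 1183808, 4734984, 529440, 1065600, 4259936,
     8519816, 532546, 1056777, 66312, 8389712, 10784, 42112, 163873, 4196482, 131602, 4195585,
     657664, 5275664, 295170, 2099217, 1115138, 8913409, 335888, 10494208, 2719744, 9701376]),
  ([3, 3, 3, 15],
    [266370, 4202656, 8519714, 37152, 1179777, 4195346, 541824, 557570, 1065504, 66192, 526369,
     2113794, 1124, 32908, 1048650, 75778, 2424864, 10487936, 1119232, 2262016, 5277696, 2824,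
     81985, 2621460, 280580, 2105920, 8978440, 133200, 2101257, 4260100, 135684, 4341768, 4722752,
     271368, 8683584, 9445380, 40977, 1310992, 8389889, 663808, 4456961, 8409104]),
  ([3, 3, 4, 4, 4, 6],
    [286848, 1188096, 4326528, 1310792, 4522016, 5246992, 2361346, 4719106, 9469954, 8274, 65674,
     135202, 17666, 266497, 1115137, 4210753, 393732, 1050756, 4235268, 295952, 1065504, 4196616,
     5640, 33120, 83984, 69700, 35329, 540684, 2097428, 8389668, 2622528, 8978688, 10506240,
     561280, 2171392, 8521792, 655377, 2097313, 8396809, 534560, 2261000, 8389264]),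
  ([3, 3, 4, 4, 5, 5],
    [2162724, 5406720, 657412, 1065120, 4456736, 8425476, 16652, 262292, 528418, 8390689, 33888,
     139808, 1050116, 4202564, 35088, 135304, 1052929, 4196482, 84480, 331840, 2629888, 10486912,
     66818, 73857, 2099272, 2101776, 557696, 1320960, 4215808, 8520000, 40970, 132113, 1048658,
     4194825, 540737, 787464, 8413200, 8651266, 2244610, 2392065, 4784144, 9502728]),
  ([3, 3, 4, 4, 10],
    [4718602, 8651392, 147492, 337, 541760, 4327488, 266312, 8396866, 1081412, 2162784, 335876,
     8425504, 532768, 4198660, 1172, 2209, 263202, 8390668, 2621956, 5243424, 559120, 4260865,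
     4472848, 9043969, 1313024, 10487040, 2392065, 9502736, 594048, 4235392, 20993, 139792,
     1056777, 2101266, 1065090, 2228360, 34312, 68098, 82184, 164098, 1184768, 2123776]),
  ([3, 3, 4, 5, 9],
    [2162721, 8405004, 4227090, 1188864, 5129, 10276, 303232, 4719680, 34336, 4202753, 66692,
     2105416, 598018, 2360336, 8389890, 8397328, 688136, 5505028, 36932, 4196488, 327944, 2621956,
     131348, 1049098, 1097729, 4341792, 2132224, 4264448, 281088, 545024, 131713, 1048928, 133186,
     1052816, 266274, 526353, 8650817, 8913056, 82000, 2113666, 9504768, 10620928]),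
  ([3, 3, 4, 6, 8],
    [4456482, 1114122, 2265088, 8912914, 5634, 35074, 147522, 2105474, 4196, 32929, 557576,
     8392968, 4722689, 8683524, 69776, 1081424, 1331200, 4300800, 264832, 4195648, 591936,
     9438336, 655492, 10485825, 270408, 4210824, 132105, 2099212, 533536, 8407072, 2638080,
     8528384, 1179936, 2163232, 82948, 1058817, 2360336, 4327440, 327937, 5243396, 8468, 16913]),
  ([3, 3, 4, 7, 7],
    [10749952, 8462344, 4327432, 2689, 8388929, 5129, 262666, 2097292, 540936, 1081416, 43010,
     83972, 526432, 1050896, 294945, 2113553, 1245185, 4726785, 2236480, 4522240, 9504, 69712,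
     589954, 1057284, 270480, 2163232, 263236, 2101506, 164100, 4210754, 132114, 4198436, 8912916,
     9437218, 147616, 4227600, 1331200, 2655232, 8406528, 8425600, 659968, 5244032]),
  ([3, 3, 4, 14],
    [264288, 132384, 1057040, 528464, 2113556, 332, 8454784, 4227108, 4260880, 8552464, 2578,
     262289, 1376260, 8398852, 135684, 525444, 81985, 10485826, 1082432, 4333632, 2164992,
     8667392, 69666, 8912929, 598024, 9441288, 2654720, 4214912, 37121, 4718850, 1065504, 2105504,
     303106, 5244929, 673792, 2364416, 34952, 4456968, 9729, 1179778, 17418, 2228233]),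
  ([3, 3, 5, 5, 8],
    [2105474, 164354, 327690, 11010049, 4169, 2228236, 5259520, 134145, 541192, 8421640, 1058824,
     4195464, 81937, 262433, 1049217, 4235265, 4849728, 9572352, 139536, 147616, 1049634, 4196370,
     528642, 8405058, 2163968, 2377728, 2372, 21508, 558096, 8391200, 592000, 8659968, 532516,
     8388756, 74304, 299136, 1146884, 4456964, 2101776, 2130016, 1310800, 4263968]),
  ([3, 3, 5, 6, 7],
    [2359316, 8388746, 4325696, 73761, 271488, 2163328, 2238464, 4526080, 8460, 65618, 213000,
     4235266, 8921152, 9502976, 590852, 1057296, 136194, 4196872, 279042, 2130952, 528393,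
     1050658, 1310792, 2621698, 8683552, 10502145, 264449, 2101344, 8391696, 8393220, 17696,
     33345, 18500, 37136, 559232, 1069184, 1212420, 4734992, 655904, 5243905, 131217, 4194468]),
  ([3, 3, 5, 13],
    [86272, 133384, 4734978, 8651010, 17032, 40970, 2621452, 5242889, 328712, 8392776, 557328,
     4202784, 1048900, 2098433, 528513, 4260356, 527392, 4325456, 598080, 4232192, 4458624,
     9044480, 10260, 163873, 270849, 8421508, 18497, 148484, 266276, 8454161, 2392128, 9446400,
     1327120, 10502176, 1083904, 2236544, 1183746, 2164738, 1114272, 2101776, 610, 1170]),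
  ([3, 3, 6, 6, 6],
    [83008, 4457728, 5312512, 147716, 1050882, 9453569, 74000, 1049744, 4734992, 6164, 393233,
     8388690, 2130448, 18952, 1212424, 10486024, 8521760, 656386, 4204545, 8454276, 2426880,
     4325952, 8426496, 559232, 2236544, 8921600, 9228, 589833, 4194442, 66082, 2098209, 4227108,
     4737, 303106, 2621508, 278688, 528672, 1056864, 33089, 1311236, 2117634, 266312]),
  ([3, 3, 6, 12],
    [33289, 5275712, 82496, 2363456, 140544, 2129956, 2194, 11010560, 2170882, 2244624, 2098312,
     2099457, 565376, 8554496, 37136, 295938, 8289, 131148, 525392, 8388930, 659457, 8658952,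
     540706, 8454164, 1180162, 4203024, 1310737, 4198410, 1058820, 4325536, 1065224, 4260865,
     21508, 327968, 4718852, 9438240, 6688, 262788, 1118336, 4474880, 591880, 8405121]),
  ([3, 3, 7, 11],
    [65673, 9715712, 168448, 532800, 2097676, 4198410, 1187848, 8945672, 17480, 264456, 1118464,
     8454720, 1049232, 8392864, 1082370, 8521732, 5242948, 10486018, 1050657, 8389649, 2228289,
     4227329, 270849, 544769, 34896, 132384, 16660, 262242, 13316, 526850, 147586, 295044, 73746,
     589860, 2181120, 4523008, 2622592, 4204672, 2363408, 4211232, 2138144, 4849680]),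
  ([3, 3, 8, 10],
    [2162705, 8466, 5406720, 4628, 656400, 1312784, 4210768, 8421520, 2139136, 4262144, 557068,
     4456484, 35330, 4199426, 36960, 4194952, 295169, 4726785, 545024, 8659456, 331784, 2621984,
     279680, 8915008, 589954, 2359362, 1114688, 2232448, 147969, 9441281, 1097, 2209, 131396,
     1056900, 141320, 1049888, 2115588, 8455172, 90144, 10486024, 1064970, 8519714]),
  ([3, 3, 9, 9],
    [2695168, 4522112, 4752384, 132232, 1056928, 8397840, 41473, 263233, 2101377, 32916, 270348,
     2098212, 141314, 1049858, 8405122, 87040, 526976, 4202816, 2392066, 65618, 528394, 4194850,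
     1116164, 4341764, 8913156, 4676, 655456, 5246992, 8454664, 65825, 540689, 4196361, 1081416,
     2228752, 8654880, 51232, 264464, 2113800, 168192, 1327616, 10487872, 9568257]),
  ([3, 3, 18],
    [1056840, 4456712, 4202529, 4229136, 10493968, 131593, 524433, 87040, 2360321, 8454401, 36929,
     1067009, 16522, 528396, 2164744, 8422408, 4341824, 5247488, 4259972, 4719618, 140416, 598528,
     41218, 272388, 2785280, 8391296, 2101408, 8929312, 2097730, 9568260, 2113796, 8654850, 1108,
     1114130, 33316, 133154, 327776, 1049888, 526656, 1343616, 135440, 279056]),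
  ([3, 4, 4, 4, 4, 5],
    [1182208, 1319936, 1069058, 2631680, 67842, 41090, 786442, 2098194, 4194850, 8519746, 8516,
     73761, 4333576, 8397328, 1048620, 1048657, 5308544, 9470208, 4197440, 8652832, 2196, 34825,
     17672, 344080, 136193, 266756, 558112, 2359488, 49728, 147616, 593984, 2101536, 4231184,
     8392840, 655632, 2163208, 524929, 2260996, 4734980, 10502145, 4456705, 8455172]),
  ([3, 4, 4, 4, 9],
    [295432, 2132000, 2367616, 75784, 524456, 4196992, 8740, 133380, 1052684, 8388756, 557124,
     2179076, 4457476, 65730, 527362, 4210698, 1196160, 8520712, 9439296, 36993, 264209, 2097417,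
     50192, 278848, 2102336, 172034, 1310754, 10486274, 2752528, 5275904, 8720384, 4370, 66848,
     545280, 4202576, 1114640, 4329504, 8921344, 131649, 1057793, 8405025, 4784129]),
  ([3, 4, 4, 5, 8],
    [4489218, 1146881, 8945668, 2246656, 167944, 2138128, 33440, 34112, 1179908, 2162820, 655394,
     10485826, 2621960, 8520720, 2359584, 4325568, 139777, 2102273, 540737, 8390689, 262281,
     4194577, 526480, 8405256, 594176, 9445504, 4727808, 8655360, 10498, 20610, 4180, 8236,
     335936, 5247008, 82976, 1051200, 66066, 1049610, 265220, 4211204, 1327120, 4261896]),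
  ([3, 4, 4, 6, 7],
    [4719680, 8651024, 131210, 37408, 2621698, 5242898, 282626, 8429570, 3106, 66114, 557073,
     4198660, 594048, 4229128, 136208, 164160, 1344512, 10489920, 1052681, 2130052, 1059072,
     2179088, 1065152, 2106376, 2132, 66817, 270401, 8406020, 1180164, 2228257, 673792, 4399104,
     532516, 4211201, 327692, 8390785, 2361856, 9502752, 4456608, 8913416, 8848, 16680]),
  ([3, 4, 4, 13],
    [4526080, 688130, 2105504, 1065480, 132116, 131393, 2232832, 4333576, 149632, 9568288,
     1085444, 4734980, 2092, 8389252, 270596, 2162756, 528528, 4228128, 295048, 590368, 278561,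
     1114241, 4386, 4194498, 5129, 4194833, 5245184, 8409152, 264706, 8454154, 41536, 2621704,
     527424, 8421648, 2131969, 8921089, 75792, 10748928, 1057794, 2113554, 83200, 1310800]),
  ([3, 4, 5, 5, 7],
    [672256, 9441408, 295938, 76032, 5243138, 10493954, 2570, 81986, 135186, 524450, 1329152,
     8716800, 1114152, 8390736, 1049617, 8421412, 1049156, 8405001, 1220608, 8914176, 2113808,
     4203040, 21536, 33424, 2101761, 4210820, 262433, 270356, 2230304, 4784144, 131340, 532545,
     196737, 530436, 2654216, 4326464, 2359488, 4460552, 9352, 37184, 2163716, 4229121]),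
  ([3, 4, 5, 6, 6],
    [2359425, 9437314, 4720896, 36996, 524960, 4195520, 82064, 139400, 541700, 4203012, 5275664,
     8917000, 2687040, 4587552, 688129, 4263937, 532498, 4210698, 1114632, 8520720, 1289, 2577,
     296968, 2101520, 262228, 2097196, 1181700, 8454404, 336896, 2245120, 67618, 131394, 1053728,
     8421952, 22592, 41248, 1056833, 8405025, 1327360, 10496000, 266754, 2130946]),
  ([3, 4, 5, 12],
    [1105, 148488, 9438240, 2593, 528393, 270376, 1130497, 8552449, 2359425, 4202753, 41988,
     328706, 2102528, 4719744, 2162724, 4227106, 20640, 655648, 2099210, 4194828, 1081608,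
     8454280, 33472, 67904, 2654224, 4263952, 301056, 598528, 5376000, 10502656, 2236480, 4472896,
     135682, 542724, 1052740, 8912962, 16658, 131220, 1311248, 8398864, 1056898, 8651012]),
  ([3, 4, 6, 11],
    [327720, 1196036, 133378, 1232, 688129, 2109952, 4329536, 8520208, 140320, 2228360, 33292,
     528420, 4457476, 8454276, 10260, 2097476, 4210976, 9439240, 4726792, 10518560, 2593, 4361,
     17418, 1048738, 4229248, 8914176, 270465, 2163713, 541312, 1086464, 295184, 591936, 41026,
     2621458, 4260354, 8654850, 5242897, 8405057, 86032, 1311296, 1122560, 2377728]),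
  ([3, 4, 7, 10],
    [594048, 2121732, 10497, 1089538, 4268064, 8921104, 139784, 271424, 66572, 524868, 542752,
     2162960, 4751368, 9502784, 68098, 525570, 344065, 2752513, 20744, 2099392, 4325696, 8652808,
     16466, 2097194, 36929, 1048713, 4460546, 8519810, 1197056, 2392576, 4211328, 10490880,
     4195345, 8389153, 5244932, 8421636, 165904, 1311008, 135204, 262292, 33952, 1053200]),
  ([3, 4, 8, 9],
    [4227330, 21506, 4740, 9568260, 300, 8392961, 2172928, 8388690, 270608, 526656, 1115392,
     2244864, 565252, 4458500, 81988, 2098196, 8397832, 8407072, 8978560, 10748416, 327690,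
     2621474, 2134024, 4263968, 659472, 1314880, 66065, 2097345, 311297, 4719617, 263328, 541192,
     164928, 5259280, 34960, 4203072, 1081888, 4325512, 133634, 1056898, 139297, 1050633]),
  ([3, 4, 17],
    [270465, 2098241, 1050641, 528514, 147474, 212, 8388904, 4194882, 4210945, 8520193, 69641,
     557089, 37392, 4784144, 9488, 10747920, 656388, 2117636, 2623744, 9442304, 533000, 4460576,
     135488, 8929344, 2163328, 4228224, 263178, 2105378, 82976, 2261000, 1081602, 8456194, 327940,
     8429572, 297024, 1122368, 1327616, 4335616, 2596, 5242892, 18568, 1179808]),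
  ([3, 5, 5, 5, 6],
    [8457, 2363904, 4866048, 9437328, 393488, 533120, 1183752, 2113920, 4206608, 8405512, 2578,
     5252, 16468, 86018, 131234, 164356, 279553, 589841, 1049153, 2230273, 4227201, 8392737,
     329856, 561216, 1067040, 2130960, 4260384, 8520768, 294952, 525600, 1123328, 2162760,
     4196672, 8431616, 270402, 526348, 1081602, 2105380, 4195338, 8454404, 5505028, 11010050]),
  ([3, 5, 5, 11],
    [2621760, 1050641, 9568260, 74368, 4460576, 1049610, 1057056, 1118272, 1327616, 5275776,
     2359425, 4719105, 143361, 8454177, 17473, 33033, 270408, 4261120, 327698, 4204546, 4341768,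
     8684544, 264452, 4194388, 131458, 8389186, 165952, 8405264, 656416, 10489864, 2228752,
     8915072, 589836, 2106372, 565264, 2181120, 544770, 2129954, 2600, 5264, 16548, 37380]),
  ([3, 5, 6, 10],
    [2162721, 11010052, 344066, 2099458, 4644, 5242914, 163920, 74756, 2117648, 2359872, 2138120,
     2229376, 36994, 131594, 525378, 8396818, 149508, 295172, 1048652, 4194452, 559136, 8519968,
     17448, 270496, 1183745, 4227585, 4857856, 9470976, 1312784, 4211008, 1073664, 4461568,
     1114496, 4261896, 590352, 8458304, 1297, 10305, 528648, 8391296, 540801, 8650761]),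
  ([3, 5, 7, 9],
    [4341776, 53760, 2392080, 8454161, 16425, 41217, 263233, 2099329, 1180161, 4722689, 2580,
     5138, 524688, 1056848, 1329152, 2638848, 82050, 8405060, 135488, 4203136, 266400, 2097736,
     590368, 9441288, 2166788, 8651266, 4261952, 8520832, 557122, 1081476, 1115392, 8923136,
     655372, 5242914, 2314, 9252, 165920, 4228104, 335880, 10486048, 2236418, 4456708]),
  ([3, 5, 8, 8],
    [1179681, 18512, 2162724, 33826, 4210728, 8390816, 270624, 528928, 2316, 17028, 1130498,
     2230274, 148736, 1083904, 4458497, 8929281, 600064, 2379776, 688136, 1311872, 4719620,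
     8683524, 328208, 2621760, 262218, 524434, 4203010, 8392962, 5243152, 8520256, 65921, 2097673,
     139284, 1052740, 4329600, 9445384, 70664, 2138240, 9281, 36881, 4292672, 10486800]),
  ([3, 5, 16],
    [344066, 4195586, 163858, 2099220, 1052932, 65809, 8389160, 598020, 1115168, 4263944, 2163328,
     8456256, 10754, 11010050, 4258, 1048650, 33804, 4325412, 262724, 8405124, 4751872, 8528896,
     21008, 9699344, 1180161, 8425473, 2364416, 5261312, 659520, 1089664, 17473, 4456577, 525456,
     4202576, 133504, 2130240, 526345, 2105377, 270600, 540960, 296992, 2244616]),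
  ([3, 6, 6, 9],
    [1180736, 8523792, 9453824, 53256, 267296, 2114688, 671748, 5246980, 8455172, 69761, 525321,
     4210721, 344080, 2625600, 4228352, 4866, 9234, 18498, 337, 1114146, 4325386, 8913026,
     2392066, 592128, 4268096, 4719120, 565280, 2163208, 4458624, 33348, 270596, 2099220, 1081488,
     2228512, 8650824, 165889, 1311233, 10493953, 172, 139904, 1058824, 8391200]),
  ([3, 6, 7, 8],
    [8684544, 804, 18946, 4719105, 262800, 8389192, 1184256, 2171392, 2359362, 9437314, 266497,
     8396833, 4466688, 8933376, 278540, 8390676, 1376288, 10617088, 1050689, 2113665, 592128,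
     4341792, 1065232, 2099240, 83008, 166016, 98321, 132105, 1057796, 2134020, 655428, 4259972,
     69642, 139282, 5280, 41280, 532616, 4198480, 2622480, 5275656, 557090, 4195586]),
  ([3, 6, 15],
    [1085568, 1180680, 4228128, 4329473, 264232, 2105480, 8454304, 657, 16457, 524577, 43009,
     1376257, 10486785, 279680, 1057312, 8945672, 69644, 2228260, 4196484, 20514, 655490, 4194826,
     164608, 529472, 5259280, 541188, 2363904, 4792320, 8538112, 139344, 4456768, 8392976, 9476,
     294932, 9437252, 66578, 1050882, 2129986, 68160, 2179328, 2623504, 8658946]),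
  ([3, 7, 7, 7],
    [17922, 262689, 2375684, 213024, 1312000, 2105872, 2098248, 2132000, 4719648, 4388, 2228354,
     8397825, 8234, 164868, 2621697, 5264, 9437344, 10555392, 133384, 663616, 4235520, 336000,
     1184256, 8405264, 65858, 1058820, 4325393, 589844, 1081362, 1114121, 264272, 4262400,
     5259328, 36929, 4194444, 8914946, 544776, 557696, 8683528, 18561, 4460546, 8389188]),
  ([3, 7, 14],
    [1056808, 132672, 264212, 4227090, 2641920, 8454161, 17040, 2097488, 533520, 1183760, 1114628,
     8396868, 147492, 2098188, 557188, 4198660, 1081409, 4203009, 34080, 4325512, 5249, 655617,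
     278537, 2099233, 4784160, 8425480, 2392576, 4212800, 174080, 5506048, 4642, 524362, 67848,
     8650912, 82946, 10616834, 270594, 1050754, 2171008, 9453824, 331840, 8915456]),
  ([3, 8, 13],
    [18945, 4784129, 8421409, 524834, 1316, 1311236, 524428, 2228304, 2179076, 4327428, 40980,
     8392772, 4227648, 8454672, 139784, 2101888, 1196064, 2361376, 69672, 4202656, 136193,
     2105601, 2655232, 9044224, 534592, 544784, 163970, 10485770, 262217, 1048721, 68736, 4210952,
     1083400, 8667264, 2322, 17474, 1114432, 4457488, 299264, 9446400, 335874, 5246978]),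
  ([3, 9, 12],
    [172, 1059072, 2396160, 540752, 4722692, 10502148, 33092, 264212, 139780, 1115140, 6720,
     2098448, 69650, 2228289, 1069184, 2629640, 5129, 2097794, 135456, 2164768, 4343808, 8978688,
     4456705, 8423426, 16650, 526465, 279584, 557600, 82433, 656386, 336000, 1212424, 4259912,
     8519824, 4202530, 9437217, 40977, 1310786, 4228224, 8651272, 5243408, 8397888]),
  ([3, 10, 11],
    [8390689, 1097, 590081, 4202754, 8388876, 1081354, 10502146, 4752, 8683648, 9568768, 8458304,
     8913936, 131154, 267266, 65698, 526850, 279041, 2228353, 40977, 5246977, 2105920, 4211840,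
     532616, 4260360, 33316, 1050756, 337920, 4849696, 1130512, 2658304, 540740, 2163716, 143364,
     4456468, 165120, 1311040, 149512, 2359336, 1057824, 4229184, 20768, 2099472]),
  ([3, 21],
    [139344, 1058824, 1311808, 329856, 2099728, 8667152, 133156, 266252, 525332, 41092, 2097476,
     5259268, 8454660, 270593, 1081361, 4196417, 18690, 2392066, 4194450, 69904, 4456992, 8947712,
     532994, 1114146, 8392770, 33352, 4269056, 9568512, 34080, 4362240, 4718856, 606272, 1053312,
     10493984, 147969, 2162697, 8389761, 16552, 2118656, 2752640, 132106, 528417]),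
  ([4, 4, 4, 4, 4, 4],
    [262308, 333824, 4214816, 66600, 2101384, 2376704, 73857, 82496, 1589376, 18442, 4195712,
     10551300, 16405, 133760, 5341184, 65810, 8421506, 8536320, 1058820, 4196417, 4719108, 4420,
     4464642, 8914976, 164868, 2131984, 4325400, 1310984, 2097698, 8393729, 295425, 1053200,
     1179681, 1049666, 2621697, 8397320, 41248, 659458, 8650832, 533520, 557128, 2236480]),
  ([4, 4, 4, 4, 8],
    [2400256, 4345856, 2752544, 5505088, 264212, 2098312, 278538, 2101253, 2163008, 8651296,
     266624, 2114064, 328705, 10487810, 542784, 1053728, 72192, 8406272, 4178, 16545, 1130500,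
     8917000, 9284, 10280, 164880, 4229248, 1181697, 4719618, 131656, 4194596, 4259864, 8519812,
     139522, 4203009, 598144, 9445392, 557572, 1081608, 524561, 1049218, 98338, 8421441]),
  ([4, 4, 4, 5, 7],
    [4866048, 8691712, 598017, 4231176, 559168, 4203648, 1058820, 2130946, 139808, 164112, 8514,
     33412, 1081377, 2105368, 524818, 4194596, 5505026, 11010052, 529664, 4262400, 524456,
     4194385, 132101, 133130, 1183808, 2293888, 2359872, 9437568, 1065480, 2113793, 1115152,
     2103328, 279584, 8407056, 266260, 8454178, 327944, 8393217, 264321, 8389704, 20610, 81988]),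
  ([4, 4, 4, 6, 6],
    [147536, 2359456, 36874, 4718597, 75008, 9439744, 10308, 66065, 1049634, 8389000, 5249, 33060,
     524872, 4196370, 528656, 559232, 4198944, 4228160, 17026, 133160, 263188, 2097473, 280577,
     393474, 2114568, 2228740, 303616, 2168832, 5259520, 9044992, 1212417, 2629634, 4521992,
     8409092, 606240, 1314880, 4333696, 10518544, 1056792, 1114244, 8396833, 8454210]),
  ([4, 4, 4, 12],
    [10816, 133125, 2097233, 73748, 1180176, 2101764, 557316, 8422016, 8912920, 34834, 524833,
     8389700, 279568, 4210724, 4456962, 82440, 1310852, 4198672, 16769, 262472, 4196488, 2639872,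
     4358208, 8658945, 2392096, 4727808, 8536066, 659584, 1089544, 10551552, 37889, 589890,
     9439264, 333824, 1069120, 5308417, 4138, 66720, 1049858, 139552, 2105474, 2229256]),
  ([4, 4, 5, 5, 6],
    [8453, 67594, 9470976, 152064, 1049112, 8405128, 1056802, 8388930, 2375682, 4719106, 5138,
     163970, 1051008, 8462352, 1130497, 8391169, 1314820, 9043972, 5374016, 10489888, 395280,
     594048, 36929, 132129, 2228488, 4206600, 2621457, 4456577, 676, 16468, 2106496, 4227344,
     2163264, 4212768, 327968, 534592, 303616, 541952, 2131972, 4260868, 263240, 557096]),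
  ([4, 4, 5, 11],
    [172096, 33952, 8651792, 4751376, 83008, 2640, 528449, 4194632, 1310788, 10485826, 35076,
     37378, 2392065, 9469960, 9221, 132106, 2622720, 5248000, 12312, 131345, 1064978, 2162708,
     331808, 8405280, 1122560, 2248704, 262530, 8392836, 280584, 8454657, 589960, 4210817, 541188,
     4261890, 532514, 4325412, 1050657, 2097704, 4465152, 9046016, 1180288, 2107520]),
  ([4, 4, 6, 10],
    [4642, 2228360, 4800512, 8423680, 1310788, 9233, 524674, 526376, 558084, 8921152, 659457,
     2621968, 2396160, 9568768, 172034, 10486816, 131364, 2099266, 2170884, 4326464, 149520,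
     2113793, 17028, 20552, 65872, 4196357, 33345, 8392724, 286752, 1065986, 330240, 5247232,
     263432, 1058944, 1081368, 8650881, 4227232, 8454154, 1114145, 4456466, 70784, 4203016]),
  ([4, 4, 7, 9],
    [688136, 132354, 131589, 18952, 9437698, 327690, 1196096, 8521760, 2232336, 4333696, 32930,
     524370, 2107394, 4214786, 2359936, 4260368, 37440, 533024, 2130948, 4718852, 49169, 526465,
     1089792, 8918016, 2703360, 4491264, 67904, 279584, 1050644, 8405124, 69668, 270404, 1115264,
     8651024, 1314817, 8462337, 5242920, 10485832, 2097441, 4195393, 4488, 9240]),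
  ([4, 4, 8, 8],
    [20800, 17568, 42000, 4326464, 2359376, 18960, 2179073, 8667144, 671746, 5259268, 1311745,
     2622472, 70660, 8389890, 4259858, 8519700, 524561, 1052696, 586, 2117, 622656, 9445440,
     532612, 1081474, 262436, 2101282, 272386, 2130436, 2236672, 4493312, 328320, 10487936, 73768,
     8421409, 1116416, 8917504, 1180192, 4720672, 135297, 4194696, 165896, 4203009]),
  ([4, 4, 16],
    [1315840, 4276480, 131589, 2105354, 526416, 8421536, 558081, 4229128, 8652804, 8929282,
     2246656, 2392576, 4727296, 8528896, 17476, 278568, 4195458, 4456465, 1304, 20609, 327746,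
     5242916, 270720, 1065488, 2163744, 4329536, 10273, 163858, 2621572, 8389192, 4642, 73748,
     1179784, 2097473, 68224, 655648, 1089600, 10489872, 37124, 593928, 1050882, 9502721]),
  ([4, 5, 5, 5, 5],
    [10384, 4866048, 1098, 1114117, 2134272, 8651296, 66368, 1053728, 2425856, 9470016, 139329,
     525332, 1065090, 4261896, 594048, 788544, 1181952, 8520832, 90144, 2113616, 4236288, 5243408,
     17665, 1318920, 4198468, 8454162, 135682, 295044, 524584, 10487809, 18948, 163864, 2629634,
     4194465, 34850, 557569, 2097800, 2228260, 266257, 4456706, 8397060, 8409096]),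
  ([4, 5, 5, 10],
    [1105, 4719620, 1066, 147492, 2593, 8650757, 1066240, 2229376, 304128, 8459264, 1376288,
     10518560, 528544, 4202784, 82049, 164097, 2629633, 5246977, 26632, 135688, 36932, 73748,
     1049220, 2099460, 266498, 8396930, 1187904, 2117648, 2359368, 9437208, 1083394, 2163202,
     590088, 4227208, 4473344, 9046016, 540738, 4325394, 264336, 8389440, 557584, 4261952]),
  ([4, 5, 6, 9],
    [4456472, 9234, 9568264, 1048597, 1048866, 2621450, 41000, 66824, 4680, 18568, 1098752,
     1122816, 1314944, 5244992, 296962, 4263938, 131714, 8405058, 163920, 8454288, 544784,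
     2099728, 591904, 2134272, 136193, 8398849, 133380, 8392740, 2244640, 8913664, 262689,
     4210945, 4857856, 10748928, 525380, 2105476, 270656, 4195488, 557185, 2162753, 344068,
     4227588]),
  ([4, 5, 7, 8],
    [33802, 18752, 9437189, 590464, 2162754, 4718856, 69656, 532514, 1049346, 8389192, 133138,
     278568, 1187848, 8654850, 2099336, 4210818, 1131520, 8947712, 5507072, 10633216, 1081424,
     8389920, 1052832, 8396944, 132228, 295041, 168192, 271424, 327940, 655425, 2105601, 4198468,
     2626560, 4300800, 67617, 540692, 10756, 20993, 2359824, 4325920, 2129956, 4195345]),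
  ([4, 5, 15],
    [10649600, 4784144, 9504, 1327616, 532994, 541697, 655496, 2621508, 559360, 8917024, 136194,
     2107393, 2163720, 4333572, 1181728, 2363648, 147776, 2097824, 131601, 2113554, 66308,
     4210728, 327714, 5243137, 32805, 8388874, 1081410, 8650881, 69697, 4196482, 2632, 20612,
     4231680, 8472576, 1122432, 4457536, 33936, 8396880, 264212, 1052696, 303112, 9438212]),
  ([4, 6, 6, 8],
    [2228229, 8913040, 5242890, 336896, 1066112, 4235280, 1297, 8833, 1181712, 4329600, 1056836,
     4195364, 69652, 264324, 540932, 8421892, 1053216, 4196672, 4784129, 9699329, 1147136,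
     4473344, 20545, 34849, 2113554, 2130056, 65698, 262232, 2163264, 2359584, 83976, 299010,
     688192, 8536096, 532520, 8389698, 132616, 139522, 526850, 8392968, 2626560, 10496000]),
  ([4, 6, 7, 7],
    [8454288, 528520, 132226, 2113554, 344, 1056773, 264736, 4227082, 41120, 5243520, 18561,
     2359428, 1083408, 4464656, 135188, 525329, 344072, 10487816, 9736, 1179688, 1118272, 8921344,
     10306, 1310978, 2301952, 9454592, 590338, 8392738, 2654272, 4215040, 164097, 4195396, 300032,
     4851712, 4259873, 8421892, 148032, 2098464, 67844, 8650817, 540708, 2101761]),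
  ([4, 6, 14],
    [8982528, 2377728, 1057344, 4359168, 67904, 8651392, 2130464, 4210768, 67074, 8519748, 147976,
     2098241, 557122, 4198916, 266312, 526849, 37136, 4718752, 540932, 2101378, 1070080, 2760704,
     135201, 525336, 82049, 10486024, 9348, 1179906, 133264, 263456, 1081480, 4202753, 5570560,
     8431616, 270354, 1050660, 73768, 9437201, 294917, 4196362, 2162708, 8405026]),
  ([4, 7, 13],
    [4329728, 2662400, 328768, 1065600, 1118224, 4472864, 299016, 4784129, 81930, 1310725, 270480,
     2163232, 264706, 8454276, 76032, 10748160, 528960, 4228224, 2117636, 5251074, 4257, 4194840,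
     4196420, 8393730, 164356, 655490, 9252, 2097234, 2099336, 8397313, 33058, 524564, 139336,
     2229249, 543744, 9470016, 1181728, 8536080, 16705, 1049864, 34833, 8912936]),
  ([4, 8, 12],
    [4200449, 133440, 1067012, 329856, 8391200, 534536, 2131970, 8388746, 131205, 9076736,
     10493956, 8389649, 8667392, 9502784, 540705, 1081857, 73985, 2359361, 37024, 4719232,
     1057920, 2113680, 270370, 2163208, 139792, 2229280, 2625792, 4235328, 266756, 4259876, 16962,
     1048872, 87040, 5505040, 33044, 525380, 295944, 589842, 1183746, 4341768, 4184, 4195586]),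
  ([4, 9, 11],
    [1061888, 541200, 4196640, 10780672, 36897, 263426, 278568, 557316, 4228104, 4460548, 4792320,
     5390336, 4194449, 4194882, 164480, 327760, 43072, 1312896, 270849, 1081362, 2101768, 8389652,
     68100, 133144, 2105616, 9437728, 8330, 1048645, 2113668, 8912968, 2229312, 8458368, 2162722,
     8519937, 2623489, 8407042, 82945, 659458, 20800, 525472, 139300, 1114376]),
  ([4, 10, 10],
    [4329600, 8652864, 1081872, 8458, 540677, 2163744, 16720, 535040, 688384, 5267456, 73793,
     148488, 2099457, 4718632, 18592, 529472, 4522240, 10625024, 131617, 1116168, 2129992,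
     4195345, 133138, 1179716, 4194882, 4229124, 86018, 270372, 2621570, 8389892, 42112, 1052960,
     2376192, 8978448, 66180, 1311746, 2101268, 8421410, 262296, 299009, 8393224, 9437313]),
  ([4, 20],
    [328000, 2099205, 1066000, 4329600, 8396810, 557600, 2171904, 9439296, 41028, 8454180,
     1053188, 4719620, 131348, 278660, 132161, 1114241, 141344, 10518656, 5513216, 8393984,
     532737, 8651265, 8848, 9060352, 526472, 2228744, 1186, 1212418, 295944, 1048872, 36881,
     4210721, 2363424, 4229376, 264210, 2113794, 20552, 4259864, 84480, 2621520, 593922, 4194882]),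
  ([5, 5, 5, 9],
    [303360, 2146306, 2359809, 165904, 1311808, 10485896, 33348, 266250, 2107424, 2752576,
     5275656, 8718336, 2370, 8265, 18952, 132360, 1050753, 8405072, 589864, 4264000, 4720644,
     81925, 545024, 4194593, 1196064, 8523777, 9437444, 139396, 1053200, 8389666, 37024, 262196,
     2102276, 558081, 2162960, 4472960, 1122306, 4325890, 8921600, 67200, 524434, 4203536]),
  ([5, 5, 6, 8],
    [9744, 4362240, 2359584, 18441, 1179653, 4718602, 132360, 4202529, 69889, 8421416, 262785,
     2097736, 557121, 1052808, 335880, 10486785, 98818, 8393220, 672256, 5245440, 529440, 1089792,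
     296976, 2117648, 266306, 2130052, 2689024, 9715712, 524564, 1048626, 133280, 4211008,
     4259984, 8519760, 10308, 17538, 81956, 8390914, 1115200, 8921216, 2236418, 4457476]),
  ([5, 5, 7, 7],
    [2196, 337920, 9699456, 2376, 267272, 655496, 1051138, 8390689, 2263040, 4737024, 1064969,
     8421386, 2162728, 4203016, 8354, 66177, 2117760, 4228224, 2359301, 4456466, 278816, 295488,
     2621698, 4325441, 17474, 37121, 200706, 533505, 1089540, 8470544, 5308672, 10494016, 2098704,
     4198436, 139536, 589892, 1180704, 8917504, 147972, 557104, 1052752, 8389892]),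
  ([5, 5, 14],
    [4325634, 2393088, 8454784, 18437, 2236544, 4461056, 264328, 2114064, 131652, 4194465, 544896,
     1059328, 525826, 1081474, 1172, 33289, 1180673, 4751364, 4261904, 8536072, 657440, 5259328,
     167952, 4203528, 344066, 10487810, 17696, 35136, 70720, 8429600, 1310768, 2621512, 4138,
     8274, 1114376, 8913168, 598017, 9441284, 2162724, 8650817, 270596, 2101505]),
  ([5, 6, 6, 7],
    [299016, 9437204, 19008, 729088, 2098256, 4194852, 41028, 70160, 131593, 524362, 2654720,
     4329536, 1114177, 8397314, 1311360, 8651072, 1052930, 8421505, 1065992, 8390696, 5253120,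
     10567680, 1212448, 8918016, 9473, 65698, 2105480, 4260104, 270384, 328708, 20612, 35088,
     134272, 540960, 2361346, 4472833, 2228484, 4718736, 147474, 526341, 2101281, 4228098]),
  ([5, 6, 13],
    [344066, 1216512, 2099205, 533632, 4325505, 8422404, 303105, 671748, 5129, 1048724, 266500,
     1065473, 8740, 524609, 4259908, 8454177, 70272, 1115392, 591880, 2170896, 264352, 2114624,
     4457488, 8405128, 134146, 2130050, 4214816, 9699392, 4178, 1048618, 35392, 2228512, 18704,
     2359816, 4227336, 8520208, 139336, 557104, 5253120, 11014144, 4719106, 8397058]),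
  ([5, 7, 12],
    [1285, 530560, 270850, 9584640, 18948, 131713, 1114640, 8421896, 2621984, 4198976, 69668,
     557121, 2101257, 4718612, 139332, 278561, 5251073, 10747908, 1081476, 8456193, 1315072,
     8922112, 20498, 655370, 168960, 606464, 2171008, 4491264, 2114624, 4325664, 10504, 263312,
     41008, 327752, 1050690, 8388770, 2130178, 4260866, 2230288, 4210824, 1049640, 8388944]),
  ([5, 8, 11],
    [4194881, 11026432, 1057824, 294930, 2232336, 8456194, 2097194, 8389652, 2360576, 8421536,
     2129988, 8651272, 2171392, 9568320, 2099329, 8392961, 280640, 561664, 4359168, 4522016,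
     40969, 1310725, 274560, 1083648, 86020, 657416, 147489, 590849, 65864, 131716, 139522,
     1114256, 2608, 5186, 532560, 1065474, 4204548, 5246984, 4210960, 4718722, 17544, 524580]),
  ([5, 9, 10],
    [4722720, 2117, 8651904, 155650, 2637840, 5373960, 655492, 4211713, 21120, 132384, 1327168,
     10618880, 81956, 167937, 18696, 131664, 567296, 4268096, 1056912, 2106376, 525378, 4196482,
     32936, 70672, 1082372, 2162817, 264240, 8392776, 1116672, 2130240, 1052930, 2097698, 327690,
     8421394, 524809, 4194580, 270593, 8397316, 4489728, 8978688, 2363396, 9437217]),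
  ([5, 19],
    [2163232, 4734980, 526472, 9502848, 4196400, 4260872, 131113, 32932, 17442, 67652, 1082432,
     1198080, 263428, 4333632, 2359376, 1049098, 16961, 4457088, 131218, 135684, 8667144, 1056788,
     10485765, 4424, 2138120, 8912962, 8552704, 2753536, 2117760, 9345, 2099458, 82192, 5243137,
     532768, 1314848, 4231170, 335874, 593921, 296961, 557584, 8393744, 8399360]),
  ([6, 6, 6, 6],
    [655428, 2130960, 8397057, 278688, 1054722, 4260360, 4644, 18441, 65682, 299016, 1122336,
     4341762, 10768, 34948, 131713, 1441808, 4464644, 5275649, 41026, 140296, 164128, 528401,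
     2162693, 8405012, 263233, 1049860, 2629760, 4194640, 8946176, 10618880, 329984, 1065536,
     2359810, 4199552, 4720672, 9437320, 524554, 607232, 2097256, 2117888, 8389666, 8458304]),
  ([6, 6, 12],
    [585, 534656, 4259874, 1064980, 8520960, 2396160, 8466, 67844, 525348, 4195472, 41992, 328208,
     2621704, 4198916, 1122368, 4333569, 4735040, 8978433, 659472, 2180096, 5275904, 8658948,
     69768, 557570, 2105888, 4458504, 278785, 1053697, 2228292, 8421456, 4448, 32901, 263234,
     2099217, 22530, 165920, 1310880, 10485890, 148096, 1179658, 8405032, 9439744]),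
  ([6, 7, 11],
    [2364416, 4366336, 8454720, 18468, 1318916, 2654240, 262248, 2097684, 74784, 8425476, 65669,
     8388898, 135712, 4195396, 655620, 5243040, 2164992, 8652928, 295169, 2105474, 8528, 33416,
     12297, 33810, 535040, 1083456, 540738, 1065473, 2228289, 4456962, 344080, 10502152, 133130,
     4196369, 528528, 1049864, 148608, 4215040, 1118210, 8913921, 4784136, 9568272]),
  ([6, 8, 10],
    [9764864, 2785280, 4260, 4212992, 141344, 524612, 147461, 4718626, 73748, 1048680, 8421892,
     10486816, 295200, 2361348, 82464, 5243908, 1065090, 4263937, 1089537, 2162754, 66824,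
     1051152, 592000, 1184000, 34826, 2097425, 8390721, 8397058, 132114, 524809, 8519816, 8917008,
     549888, 4325952, 2117640, 4227216, 278608, 4464648, 263297, 266754, 37952, 2105984]),
  ([6, 9, 9],
    [4199680, 1089664, 589842, 10488320, 4268544, 4720768, 4325456, 4472834, 4227081, 5242916,
     674, 10257, 35074, 1053200, 67652, 541192, 295488, 1198080, 131589, 264232, 2146320, 9437250,
     558084, 1115144, 167968, 1310977, 2101258, 8388884, 82208, 528449, 140290, 263312, 2098272,
     8406017, 2752768, 8720384, 2162817, 8921120, 8520, 20612, 2367492, 8519816]),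
  ([6, 18],
    [1180928, 5261312, 8470784, 37128, 1049184, 2375682, 16552, 524578, 1056778, 545280, 1343616,
     2105664, 17425, 1114132, 4194565, 147524, 264464, 9441281, 69698, 263240, 4460576, 34881,
     2232336, 8651268, 5252, 335873, 4718672, 2163744, 4228098, 4260360, 592000, 4333696, 8922112,
     41488, 2097793, 2654212, 10276, 655369, 8388754, 133634, 8552480, 10487816]),
  ([7, 7, 10],
    [4227112, 4292, 1181952, 2170896, 4342784, 9470464, 163906, 5242885, 131604, 1049680, 139273,
     1056802, 1376384, 2756608, 1069064, 8519840, 37136, 4196496, 278545, 8912914, 17026, 8393729,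
     266784, 525448, 2130049, 4263938, 264202, 524577, 68097, 2098434, 66596, 2097736, 2115616,
     8454408, 304128, 4727296, 606272, 10747908, 559108, 4456768, 24836, 8398912]),
  ([7, 8, 9],
    [4460672, 8519746, 2623744, 1048613, 278816, 4204548, 340, 2090, 295940, 4260384, 167968,
     8454276, 671748, 10493984, 525472, 2101764, 2228360, 8917008, 1182208, 9438464, 4325633,
     8652801, 140304, 8405512, 41224, 83984, 35008, 69890, 1056898, 1069120, 657, 5129, 598017,
     2146305, 270912, 4211714, 557570, 2163776, 2359314, 4718664, 1376264, 5275664]),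
  ([7, 17],
    [263188, 295200, 139394, 2179073, 2359306, 1320960, 10486020, 69904, 540930, 133377, 9568288,
     66594, 2262016, 8390674, 659460, 1053697, 18468, 2101408, 1065104, 147976, 4325456, 2105872,
     2623552, 557073, 8233, 4719136, 8986624, 525448, 4203776, 8406080, 1048904, 41028, 4476928,
     8425480, 4674, 327872, 8651265, 35456, 4194437, 5275650, 4261896, 1114628]),
  ([8, 8, 8],
    [2621954, 4194836, 4199426, 266512, 532497, 8917024, 66704, 622596, 2134144, 525576, 1052677,
     10487824, 151560, 657472, 1065040, 70208, 163858, 4735104, 4325633, 8388930, 8405505, 9284,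
     2228260, 2376704, 33825, 2171136, 8650884, 18692, 2097225, 9569280, 81954, 139904, 4489280,
     329729, 1048992, 8429576, 2186, 1083904, 5308424, 262696, 1318914, 4204576]),
  ([8, 16],
    [4723200, 270354, 1050657, 2245632, 66084, 4227081, 2105857, 4457504, 135233, 540832, 327937,
     8429600, 131368, 8404997, 525329, 2101282, 282632, 663556, 1065536, 4327552, 83984, 1212418,
     4210946, 8520208, 650, 4194388, 297472, 5316608, 2099460, 9438216, 10312, 1310852, 1052944,
     8914946, 66626, 2130064, 9600, 10747968, 557376, 8458368, 37892, 2686984]),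
  ([9, 15],
    [2085, 65832, 2097476, 1124352, 2425856, 10520576, 657664, 2117664, 4260356, 69762, 2228242,
     4196496, 264202, 2105473, 8454224, 19008, 606209, 2621960, 8962, 278548, 8913056, 295552,
     533520, 9453570, 561156, 1180192, 4211968, 4625, 147592, 4718658, 4464672, 8527876, 8655104,
     33826, 1049732, 1081616, 41032, 1310785, 8389641, 136256, 4358145, 5246984]),
  ([10, 14],
    [528394, 2752640, 4768, 17540, 8945668, 4270080, 4420, 1310737, 2162708, 4325381, 270852,
     1050660, 70657, 4214800, 1216512, 10752000, 606720, 4719648, 526416, 532737, 34945, 8396944,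
     1114248, 4456578, 4227336, 8454210, 327968, 5243456, 280584, 1057794, 132368, 2113601,
     296000, 9453824, 33298, 8388649, 2138144, 8522240, 139336, 2099458, 147490, 2098696]),
  ([11, 13],
    [598048, 2100228, 2338, 270596, 2130192, 1343490, 4751364, 9346, 8553472, 8454401, 4461568,
     66640, 37408, 2163202, 69764, 4325536, 8405028, 8651328, 11010176, 2117696, 2359329, 4194632,
     43072, 264336, 9445392, 4210706, 1049640, 2236424, 4203009, 5310464, 8392714, 344072, 32905,
     526856, 149505, 528401, 131604, 1184000, 1065600, 1048645, 655426, 541952]),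
  ([12, 12],
    [268320, 2130180, 533000, 4259905, 1065090, 8520720, 18452, 131236, 1049888, 8390914, 73762,
     590096, 4203524, 4720768, 139521, 1116168, 4211232, 8912964, 70148, 557089, 2107456, 4456712,
     20800, 166400, 1310725, 10485800, 2768896, 5378048, 8732672, 9478144, 270480, 529410,
     2163840, 4227090, 37000, 296000, 2101265, 2359810, 17417, 131146, 1049168, 8389249]),
  ([24],
    [270376, 2107396, 2622496, 33060, 2359425, 8463360, 4641, 1188096, 2162706, 84000, 2097480,
     4726785, 16657, 1114177, 4264192, 132101, 263426, 328196, 34825, 589960, 8915200, 528452,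
     1065992, 4458512, 4210820, 4228160, 8667200, 5264, 1347584, 9437204, 8784, 2248704, 5242914,
     133186, 541186, 4325896, 41090, 8519840, 10519040, 688144, 1051264, 8392714])]

section Table

set_option maxRecDepth 20000

theorem mem_table_of_mem_partitionsInto :
    ∀ k ≤ 8, ∀ L ∈ partitionsInto k 24 3, L ∈ table.map Prod.fst := by
  decide +kernel

theorem length_of_mem_table : ∀ e ∈ table, e.2.length = 42 := by
  decide +kernel

theorem card_pointSet_of_mem_table : ∀ e ∈ table, ∀ m ∈ e.2, #(pointSet 24 m) = 4 := by
  decide +kernel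

theorem starMask_of_mem_table : ∀ e ∈ table, ∀ i : Fin 24,
    starMask e.2 i ||| 2 ^ (i : ℕ) ||| 2 ^ (rotateIntervals 24 e.1 i : ℕ) |||
      2 ^ ((rotateIntervals 24 e.1).symm i : ℕ) = 2 ^ 24 - 1 := by
  decide +kernel

end Table

theorem exists_mem_table {L : List ℕ} (hsorted : L.Pairwise (· ≤ ·)) (hsum : L.sum = 24)
    (hL : ∀ a ∈ L, 3 ≤ a) : ∃ masks, (L, masks) ∈ table := by
  have hlen : L.length ≤ 8 := by
    have := L.card_nsmul_le_sum 3 hL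
    rw [hsum, smul_eq_mul] at this
    lia
  have hmem : L ∈ table.map Prod.fst :=
    mem_table_of_mem_partitionsInto L.length hlen L (hsum ▸ mem_partitionsInto hsorted hL)
  obtain ⟨e, he, rfl⟩ := List.mem_map.1 hmem
  exact ⟨e.2, he⟩

theorem coversCompl_of_mem_table {e : List ℕ × List ℕ} (he : e ∈ table) :
    CoversCompl (orbitGraph (rotateIntervals 24 e.1)) (e.2.toFinset.image (pointSet 24)) := by
  intro p q hpq hadj
  obtain ⟨hp, hq⟩ : rotateIntervals 24 e.1 p ≠ q ∧ rotateIntervals 24 e.1 q ≠ p := by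
    simpa [orbitGraph_adj, hpq] using hadj
  have hp_symm : (rotateIntervals 24 e.1).symm p ≠ q :=
    fun h => hq ((Equiv.symm_apply_eq _).1 h).symm
  have hbit : (starMask e.2 p).testBit q := by
    simpa [Nat.testBit_two_pow, Nat.testBit_two_pow_sub_one, Fin.val_inj, hpq, hp, hp_symm,
      -Nat.reducePow, -Nat.reduceSub] using
      congrArg (Nat.testBit · q) (starMask_of_mem_table e he p)
  obtain ⟨m, hm, hpm, hqm⟩ := testBit_starMask.1 hbit
  exact ⟨pointSet 24 m, Finset.mem_image_of_mem _ (List.mem_toFinset.2 hm),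
    mem_pointSet.2 hpm, mem_pointSet.2 hqm⟩

theorem exists_coversCompl {σ : Perm (Fin 24)} (hσ : ∀ v, σ (σ v) ≠ v) :
    ∃ B : Finset (Finset (Fin 24)), CoversCompl (orbitGraph σ) B ∧ #B ≤ 42 ∧ ∀ b ∈ B, #b = 4 := by
  let L := σ.cycleType.sort (· ≤ ·)
  have hL : (L : Multiset ℕ) = σ.cycleType := Multiset.sort_eq _ _
  have hsum : L.sum = 24 := by
    rw [← Multiset.sum_coe, hL, sum_cycleType_of_apply_ne fun v hv => hσ v (by rw [hv, hv]),
      Fintype.card_fin]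
  have hthree : ∀ a ∈ L, 3 ≤ a := fun a ha =>
    three_le_of_mem_cycleType hσ ((Multiset.mem_sort _).1 ha)
  obtain ⟨masks, hmem⟩ := exists_mem_table (Multiset.pairwise_sort _ _) hsum hthree
  have hconj : IsConj (rotateIntervals 24 L) σ := by
    rw [Perm.isConj_iff_cycleType_eq, ← hL]
    exact cycleType_rotateIntervals hsum fun a ha => (hthree a ha).trans' (by decide)
  obtain ⟨φ⟩ := nonempty_orbitGraph_iso_of_isConj hconj
  refine ⟨_, (coversCompl_of_mem_table hmem).image_iso φ, ?_, ?_⟩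
  · calc _ ≤ #masks.toFinset := Finset.card_image_le.trans Finset.card_image_le
      _ ≤ masks.length := masks.toFinset_card_le
      _ = 42 := length_of_mem_table _ hmem
  · simp only [Finset.forall_mem_image, List.mem_toFinset, Finset.card_map]
    exact card_pointSet_of_mem_table _ hmem

theorem isPacking_and_adj_iff_leaveAdj_of_coversCompl {G : SimpleGraph (Fin 24)}
    (hG : ∀ v, {w | G.Adj v w}.ncard = 2) {B : Finset (Finset (Fin 24))} (hB : CoversCompl G B)
    (hle : #B ≤ 42) (hfour : ∀ b ∈ B, #b = 4) :
    IsPacking B ∧ #B = 42 ∧ ∀ p q, G.Adj p q ↔ LeaveAdj B p q := by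
  classical
  have hblocks : ∑ b ∈ B, #b.offDiag = #B * 12 :=
    Finset.sum_const_nat fun b hb => by rw [Finset.offDiag_card, hfour b hb]
  have hdegrees : ∑ v, G.degree v = 24 * 2 :=
    Finset.sum_const_nat fun v _ => by
      rw [← G.card_neighborFinset_eq_degree, ← Set.ncard_coe_finset, G.coe_neighborFinset]
      exact hG v
  have hpairs : #(Finset.univ : Finset (Fin 24)).offDiag = 552 := by
    rw [Finset.offDiag_card, Finset.card_fin]
  have hge := hB.card_offDiag_le
  have hcount {p q : Fin 24} (hpq : p ≠ q) := hB.card_filter_mem_eq_ite (by lia) hpq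
  refine ⟨⟨hfour, fun p q hpq b₁ hb₁ b₂ hb₂ hp₁ hq₁ hp₂ hq₂ => ?_⟩, by lia, fun p q => ?_⟩
  · have hle_one : #{b ∈ B | p ∈ b ∧ q ∈ b} ≤ 1 := by
      rw [hcount hpq]
      split_ifs <;> decide
    exact Finset.card_le_one.1 hle_one b₁ (Finset.mem_filter.2 ⟨hb₁, hp₁, hq₁⟩) b₂
      (Finset.mem_filter.2 ⟨hb₂, hp₂, hq₂⟩)
  · refine ⟨fun hadj => ⟨hadj.ne, ?_⟩, fun ⟨hpq, hleave⟩ => ?_⟩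
    · rw [← Finset.filter_eq_empty_iff, ← Finset.card_eq_zero, hcount hadj.ne, if_pos hadj]
    · by_contra hadj
      obtain ⟨b, hb, hmem⟩ := hB p q hpq hadj
      exact hleave b hb hmem

/-- Every 2-regular graph on 24 vertices is the leave of some maximum 2-(24,4,1) packing. -/
theorem every_two_regular_graph_is_a_leave (G : SimpleGraph (Fin 24))
    (hG : ∀ v : Fin 24, {w | G.Adj v w}.ncard = 2) :
    ∃ B : Finset (Finset (Fin 24)), IsPacking B ∧ B.card = 42 ∧
      ∀ p q : Fin 24, G.Adj p q ↔ LeaveAdj B p q := by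
  obtain ⟨σ, rfl, hσ⟩ := exists_eq_orbitGraph hG
  obtain ⟨B, hB, hle, hfour⟩ := exists_coversCompl hσ
  exact ⟨B, isPacking_and_adj_iff_leaveAdj_of_coversCompl hG hB hle hfour⟩
end

section
/- If a 2-(24,4,1) packing has exactly 42 blocks, then its leave is a 2-regular graph on the 24 points, i.e., every point lies in exactly 2 uncovered pairs; consequently every point lies in exactly 7 blocks. -/
section LinearFamily

open Finset

variable {α : Type*} {B : Finset (Finset α)} {k : ℕ}

/-- A linear family of blocks: two distinct points lie in at most one common block. A
2-(n, k, 1) packing is a linear family on `n` points all of whose blocks have size `k`. -/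
def IsLinearFamily (B : Finset (Finset α)) : Prop :=
  ∀ p q : α, p ≠ q → ∀ b₁ ∈ B, ∀ b₂ ∈ B, p ∈ b₁ → q ∈ b₁ → p ∈ b₂ → q ∈ b₂ → b₁ = b₂

/-- The collinearity graph of a family of blocks: distinct points are adjacent when some block
contains both. -/
def collinearityGraph (B : Finset (Finset α)) : SimpleGraph α where
  Adj p q := p ≠ q ∧ ∃ b ∈ B, p ∈ b ∧ q ∈ b
  symm := ⟨fun _ _ ⟨hne, b, hb, hp, hq⟩ => ⟨hne.symm, b, hb, hq, hp⟩⟩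
  loopless := ⟨fun _ h => h.1 rfl⟩

lemma collinearityGraph_adj {p q : α} :
    (collinearityGraph B).Adj p q ↔ p ≠ q ∧ ∃ b ∈ B, p ∈ b ∧ q ∈ b :=
  Iff.rfl

/-- The leave of a family of blocks: distinct points are adjacent when no block contains both. As a
complement, its degrees can be read off from those of the collinearity graph. -/
abbrev leave (B : Finset (Finset α)) : SimpleGraph α :=
  (collinearityGraph B)ᶜ

variable [DecidableEq α]

instance : DecidableRel (collinearityGraph B).Adj :=
  fun p q => inferInstanceAs (Decidable (p ≠ q ∧ ∃ b ∈ B, p ∈ b ∧ q ∈ b))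

lemma IsLinearFamily.pairwiseDisjoint_erase (hB : IsLinearFamily B) (v : α) :
    (↑{b ∈ B | v ∈ b} : Set (Finset α)).PairwiseDisjoint (·.erase v) := by
  intro b hb c hc hbc
  obtain ⟨hbB, hvb⟩ := mem_filter.1 hb
  obtain ⟨hcB, hvc⟩ := mem_filter.1 hc
  refine disjoint_left.2 fun w hwb hwc => hbc ?_
  obtain ⟨hwv, hwb⟩ := mem_erase.1 hwb
  exact hB v w hwv.symm b hbB c hcB hvb hwb hvc (mem_of_mem_erase hwc)

variable [Fintype α]

lemma neighborFinset_collinearityGraph (B : Finset (Finset α)) (v : α) :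
    (collinearityGraph B).neighborFinset v = {b ∈ B | v ∈ b}.biUnion (·.erase v) := by
  ext w
  simp only [SimpleGraph.mem_neighborFinset, collinearityGraph_adj, mem_biUnion, mem_filter,
    mem_erase]
  grind

lemma IsLinearFamily.degree_collinearityGraph (hB : IsLinearFamily B) (v : α) :
    (collinearityGraph B).degree v = ∑ b ∈ B with v ∈ b, (#b - 1) := by
  rw [← SimpleGraph.card_neighborFinset_eq_degree, neighborFinset_collinearityGraph,
    card_biUnion (hB.pairwiseDisjoint_erase v)]
  exact sum_congr rfl fun b hb => card_erase_of_mem (mem_filter.1 hb).2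

lemma IsLinearFamily.degree_collinearityGraph_of_sized (hB : IsLinearFamily B)
    (hk : (B : Set (Finset α)).Sized k) (v : α) :
    (collinearityGraph B).degree v = #{b ∈ B | v ∈ b} * (k - 1) := by
  rw [hB.degree_collinearityGraph]
  exact sum_const_nat fun b hb => by rw [hk (mem_filter.1 hb).1]

lemma IsLinearFamily.card_filter_mem_le (hB : IsLinearFamily B)
    (hk : (B : Set (Finset α)).Sized k) (hk₁ : 1 < k) (v : α) :
    #{b ∈ B | v ∈ b} ≤ (Fintype.card α - 1) / (k - 1) := by
  rw [Nat.le_div_iff_mul_le (Nat.sub_pos_of_lt hk₁), ← hB.degree_collinearityGraph_of_sized hk]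
  exact Nat.le_sub_one_of_lt ((collinearityGraph B).degree_lt_card_verts v)

lemma sum_card_filter_mem (B : Finset (Finset α)) :
    ∑ v, #{b ∈ B | v ∈ b} = ∑ b ∈ B, #b := by
  simpa only [bipartiteAbove, bipartiteBelow, filter_univ_mem] using
    sum_card_bipartiteAbove_eq_sum_card_bipartiteBelow (s := univ) (t := B) (fun v b => v ∈ b)

theorem IsLinearFamily.card_filter_mem_eq (hB : IsLinearFamily B)
    (hk : (B : Set (Finset α)).Sized k) (hk₁ : 1 < k)
    (hcard : #B * k = Fintype.card α * ((Fintype.card α - 1) / (k - 1))) (v : α) :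
    #{b ∈ B | v ∈ b} = (Fintype.card α - 1) / (k - 1) := by
  have hsum : ∑ v, #{b ∈ B | v ∈ b} = ∑ _v : α, (Fintype.card α - 1) / (k - 1) := by
    rw [sum_card_filter_mem, sum_const_nat hk, hcard, sum_const, card_univ, smul_eq_mul]
  exact (sum_eq_sum_iff_of_le fun v _ => hB.card_filter_mem_le hk hk₁ v).1 hsum v (mem_univ v)

/-- The cardinality hypothesis says that `B` attains the Johnson bound
`#B ≤ n * ⌊(n - 1) / (k - 1)⌋ / k` on packings of `n` points, without rounding in the division by
`k`. -/
theorem leave_of_maximum_packing_two_regular_general (hB : IsLinearFamily B)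
    (hk : (B : Set (Finset α)).Sized k) (hk₁ : 1 < k)
    (hcard : #B * k = Fintype.card α * ((Fintype.card α - 1) / (k - 1))) :
    (leave B).IsRegularOfDegree ((Fintype.card α - 1) % (k - 1)) ∧
      ∀ v, #{b ∈ B | v ∈ b} = (Fintype.card α - 1) / (k - 1) := by
  have hr := hB.card_filter_mem_eq hk hk₁ hcard
  refine ⟨fun v => ?_, hr⟩
  rw [SimpleGraph.degree_compl, hB.degree_collinearityGraph_of_sized hk, hr, mul_comm,
    Nat.mod_eq_sub_mul_div]

end LinearFamily

lemma leave_adj_iff_leaveAdj {B : Finset (Finset (Fin 24))} {v w : Fin 24} :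
    (leave B).Adj v w ↔ LeaveAdj B v w := by
  simp only [SimpleGraph.compl_adj, collinearityGraph_adj, LeaveAdj]
  grind

lemma ncard_leaveAdj (B : Finset (Finset (Fin 24))) (v : Fin 24) :
    {w | LeaveAdj B v w}.ncard = (leave B).degree v := by
  simp only [← leave_adj_iff_leaveAdj, ← SimpleGraph.card_neighborFinset_eq_degree,
    ← Set.ncard_coe_finset, SimpleGraph.coe_neighborFinset, SimpleGraph.neighborSet]

/-- The leave of a maximum 2-(24,4,1) packing is 2-regular, and every point lies
in exactly 7 blocks. -/
theorem leave_of_maximum_packing_two_regular (B : Finset (Finset (Fin 24)))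
    (hB : IsPacking B) (hcard : B.card = 42) :
    (∀ v : Fin 24, {w | LeaveAdj B v w}.ncard = 2) ∧
    (∀ v : Fin 24, (B.filter (fun b => v ∈ b)).card = 7) := by
  obtain ⟨hleave, hr⟩ :=
    leave_of_maximum_packing_two_regular_general hB.2 hB.1 (by norm_num) (by simp [hcard])
  exact ⟨fun v => (ncard_leaveAdj B v).trans (hleave v), hr⟩
end

section
/- There exists a 2-(24,4,1) packing with 42 blocks whose leave is a vertex-disjoint union of six cycles of length 3 and one cycle of length 6, covering all 24 points (leave type 3^6 6^1). -/
section

open Finset Function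
open scoped Pointwise

instance (B : Finset (Finset (Fin 24))) : DecidableRel (LeaveAdj B) := fun p q =>
  inferInstanceAs (Decidable (p ≠ q ∧ ∀ b ∈ B, ¬ (p ∈ b ∧ q ∈ b)))

variable {B : Finset (Finset (Fin 24))} {L : List ℕ}

lemma IsPacking.three_mul_card_filter_mem_add_card_leaveAdj (hB : IsPacking B) (p : Fin 24) :
    3 * #{b ∈ B | p ∈ b} + #{q | LeaveAdj B p q} = 23 := by
  have hdisj : Set.PairwiseDisjoint (↑{b ∈ B | p ∈ b} : Set (Finset (Fin 24))) (erase · p) := by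
    intro b₁ h₁ b₂ h₂ hne
    simp only [coe_filter, Set.mem_ofPred_eq] at h₁ h₂
    refine disjoint_left.mpr fun q hq₁ hq₂ => hne ?_
    rw [mem_erase] at hq₁ hq₂
    exact hB.2 p q hq₁.1.symm b₁ h₁.1 b₂ h₂.1 h₁.2 hq₁.2 h₂.2 hq₂.2
  have hcovered : #({b ∈ B | p ∈ b}.biUnion (erase · p)) = 3 * #{b ∈ B | p ∈ b} := by
    rw [card_biUnion hdisj, sum_const_nat (m := 3), mul_comm]
    intro b hb
    rw [mem_filter] at hb
    rw [card_erase_of_mem hb.2, hB.1 b hb.1]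
  have hcompl : ({q | LeaveAdj B p q} : Finset (Fin 24)) =
      univ.erase p \ {b ∈ B | p ∈ b}.biUnion (erase · p) := by
    ext q
    simp only [LeaveAdj, mem_filter, mem_univ, mem_sdiff, mem_erase, mem_biUnion]
    grind
  have hsub : {b ∈ B | p ∈ b}.biUnion (erase · p) ⊆ univ.erase p :=
    biUnion_subset.mpr fun b _ => erase_subset_erase p (subset_univ b)
  rw [hcompl, ← hcovered, add_comm, card_sdiff_add_card_eq_card hsub,
    card_erase_of_mem (mem_univ p), card_univ, Fintype.card_fin]

lemma zmod_add_one_ne_sub_one {n : ℕ} (hn : 3 ≤ n) (k : ZMod n) : k + 1 ≠ k - 1 := by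
  intro h
  have htwo : ((2 : ℕ) : ZMod n) = 0 := by
    push_cast
    linear_combination h
  exact absurd (Nat.le_of_dvd two_pos ((ZMod.natCast_eq_zero_iff 2 n).mp htwo)) (by lia)

lemma LeaveIsCycleType.card_leaveAdj (h : LeaveIsCycleType B L) (hL : ∀ n ∈ L, 3 ≤ n)
    (p : Fin 24) : #{q | LeaveAdj B p q} = 2 := by
  obtain ⟨f, ⟨hinj, hsurj⟩, hadj⟩ := h
  obtain ⟨⟨i, k⟩, rfl⟩ := hsurj p
  have hvertex {j₁ l₁ j₂ l₂} (h : f j₁ l₁ = f j₂ l₂) :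
      (⟨j₁, l₁⟩ : Σ i, ZMod (L.get i)) = ⟨j₂, l₂⟩ :=
    hinj h
  have hneighbours : ({q | LeaveAdj B (f i k) q} : Finset (Fin 24)) =
      {f i (k + 1), f i (k - 1)} := by
    ext q
    simp only [mem_filter, mem_univ, true_and, mem_insert, mem_singleton, hadj]
    constructor
    · rintro ⟨j, l, ⟨hl, rfl⟩ | ⟨rfl, hl⟩⟩
      · cases hvertex hl
        exact .inl rfl
      · cases hvertex hl
        exact .inr (by rw [add_sub_cancel_right])
    · rintro (rfl | rfl)
      · exact ⟨i, k, .inl ⟨rfl, rfl⟩⟩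
      · exact ⟨i, k - 1, .inr ⟨rfl, by rw [sub_add_cancel]⟩⟩
  rw [hneighbours, card_pair]
  intro heq
  exact zmod_add_one_ne_sub_one (hL _ (L.get_mem i)) k (by simpa using hvertex heq)

theorem IsPacking.card_eq_of_leaveIsCycleType (hB : IsPacking B) (h : LeaveIsCycleType B L)
    (hL : ∀ n ∈ L, 3 ≤ n) : #B = 42 := by
  have hdegree (p : Fin 24) : #{b ∈ B | p ∈ b} = 7 := by
    have := hB.three_mul_card_filter_mem_add_card_leaveAdj p
    rw [h.card_leaveAdj hL p] at this
    lia
  have hflags : ∑ b ∈ B, #b = 24 * 7 := by simpa using sum_card hdegree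
  rw [sum_const_nat hB.1] at hflags
  lia

variable {G : Type*} [AddGroup G] [AddAction G (Fin 24)] {H : Finset G}
  {F : Finset (Finset (Fin 24))}

lemma isPacking_vadd (hH : ∀ g ∈ H, ∀ h ∈ H, -h + g ∈ H) (hcard : ∀ b ∈ F, #b = 4)
    (hF : ∀ g ∈ H, ∀ a ∈ F, ∀ b ∈ F, ∀ p ∈ a, g +ᵥ p ∈ b → ∀ q ∈ a, g +ᵥ q ∈ b → p ≠ q →
      g +ᵥ a = b) :
    IsPacking (H +ᵥ F) := by
  constructor
  · intro b hb
    obtain ⟨g, -, a, ha, rfl⟩ := mem_vadd.mp hb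
    rw [card_vadd_finset, hcard a ha]
  · intro p q hpq b₁ hb₁ b₂ hb₂ hp₁ hq₁ hp₂ hq₂
    obtain ⟨g, hg, a, ha, rfl⟩ := mem_vadd.mp hb₁
    obtain ⟨h, hh, b, hb, rfl⟩ := mem_vadd.mp hb₂
    obtain ⟨p, hp, rfl⟩ := mem_vadd_finset.mp hp₁
    obtain ⟨q, hq, rfl⟩ := mem_vadd_finset.mp hq₁
    rw [← neg_vadd_mem_iff, vadd_vadd] at hp₂ hq₂
    have htranslate : (-h + g) +ᵥ a = b :=
      hF (-h + g) (hH g hg h hh) a ha b hb p hp hp₂ q hq hq₂ (ne_of_apply_ne _ hpq)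
    rw [← htranslate, vadd_vadd, add_neg_cancel_left]

lemma leaveAdj_vadd {p q : Fin 24} :
    LeaveAdj (H +ᵥ F) p q ↔
      p ≠ q ∧ ∀ g ∈ H, ∀ b ∈ F, ¬ (-g +ᵥ p ∈ b ∧ -g +ᵥ q ∈ b) := by
  simp only [LeaveAdj, mem_vadd, neg_vadd_mem_iff]
  grind

lemma leaveIsCycleType_of_iterate {σ : Fin 24 → Fin 24} {x : Fin L.length → Fin 24}
    (hL : 0 ∉ L) (hsum : L.sum = 24) (hper : ∀ i, IsPeriodicPt σ (L.get i) (x i))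
    (hcover : ∀ p, ∃ i, ∃ n < L.get i, σ^[n] (x i) = p)
    (hadj : ∀ p q, LeaveAdj B p q ↔ q = σ p ∨ p = σ q) : LeaveIsCycleType B L := by
  have (i : Fin L.length) : NeZero (L.get i) := ⟨ne_of_mem_of_not_mem (L.get_mem i) hL⟩
  have hsurj : Surjective fun v : Σ i, ZMod (L.get i) => σ^[v.2.val] (x v.1) := by
    intro p
    obtain ⟨i, n, hn, rfl⟩ := hcover p
    exact ⟨⟨i, n⟩, by simp only [ZMod.val_natCast_of_lt hn]⟩
  have hsucc (i) (k : ZMod (L.get i)) : σ^[(k + 1).val] (x i) = σ (σ^[k.val] (x i)) := by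
    rw [← iterate_succ_apply' σ, ← (hper i).iterate_mod_apply k.val.succ, ← ZMod.val_natCast,
      Nat.cast_succ, ZMod.natCast_zmod_val]
  refine ⟨fun i k => σ^[k.val] (x i), ?_, fun p q => ?_⟩
  · refine (Fintype.bijective_iff_surjective_and_card _).mpr ⟨hsurj, ?_⟩
    simp only [Fintype.card_sigma, ZMod.card, Fintype.card_fin, ← hsum, List.get_eq_getElem,
      Fin.sum_univ_getElem]
  · simp only [hadj, hsucc]
    constructor
    · obtain ⟨⟨i, k⟩, rfl⟩ := hsurj p
      obtain ⟨⟨j, l⟩, rfl⟩ := hsurj q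
      rintro (h | h)
      · exact ⟨i, k, .inl ⟨rfl, h⟩⟩
      · exact ⟨j, l, .inr ⟨rfl, h⟩⟩
    · rintro ⟨i, k, ⟨rfl, rfl⟩ | ⟨rfl, rfl⟩⟩
      exacts [.inl rfl, .inr rfl]

/-- Representatives of the orbits of blocks under translation by `8`, as lists of their points:
quantifiers over lists are evaluated much faster by the kernel than quantifiers over `Finset`s. -/
def baseLists : List (List (Fin 24)) :=
  [[0, 3, 10, 15], [0, 4, 19, 23], [0, 5, 6, 16], [0, 7, 20, 22], [0, 9, 11, 17],
   [0, 12, 18, 21], [1, 4, 18, 20], [1, 5, 11, 14], [1, 6, 12, 22], [1, 7, 10, 23],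
   [1, 13, 15, 21], [2, 3, 11, 22], [2, 6, 13, 18], [3, 13, 20, 23]]

/-- The base blocks: their translates by multiples of `8` are the blocks of the packing. -/
def baseBlocks : Finset (Finset (Fin 24)) := (baseLists.map List.toFinset).toFinset

/-- The packing, invariant under translation by the subgroup `{0, 8, 16}` of `ℤ/24`. -/
def blocks : Finset (Finset (Fin 24)) := ({0, 8, 16} : Finset (Fin 24)) +ᵥ baseBlocks

/-- The successor map along the cycles of the leave of `blocks`: the triangles are the translates of
`{0, 1, 2}` and `{3, 4, 5}`, the hexagon is `6, 7, 14, 15, 22, 23`. -/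
def leaveSucc (p : Fin 24) : Fin 24 := p + ![1, 1, -2, 1, 1, -2, 1, 7] (Fin.ofNat 8 p)

lemma forall_mem_baseBlocks {P : Finset (Fin 24) → Prop} :
    (∀ b ∈ baseBlocks, P b) ↔ ∀ l ∈ baseLists, P l.toFinset := by
  simp [baseBlocks]

lemma isPacking_blocks : IsPacking blocks := by
  have hcard : ∀ b ∈ baseBlocks, #b = 4 := by
    rw [forall_mem_baseBlocks]
    decide +kernel
  have htranslates : ∀ g ∈ ({0, 8, 16} : Finset (Fin 24)), ∀ a ∈ baseBlocks, ∀ b ∈ baseBlocks,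
      ∀ p ∈ a, g +ᵥ p ∈ b → ∀ q ∈ a, g +ᵥ q ∈ b → p ≠ q → g +ᵥ a = b := by
    simp only [forall_mem_baseBlocks, List.mem_toFinset]
    decide +kernel
  exact isPacking_vadd (by decide) hcard htranslates

lemma leaveAdj_blocks_iff (p q : Fin 24) :
    LeaveAdj blocks p q ↔ q = leaveSucc p ∨ p = leaveSucc q := by
  rw [blocks, leaveAdj_vadd]
  simp only [forall_mem_baseBlocks, List.mem_toFinset]
  revert p q
  decide +kernel

lemma leaveIsCycleType_blocks : LeaveIsCycleType blocks [3, 3, 3, 3, 3, 3, 6] :=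
  leaveIsCycleType_of_iterate (σ := leaveSucc) (x := ![0, 3, 8, 11, 16, 19, 6])
    (hL := by decide) (hsum := by decide) (hper := by unfold IsPeriodicPt IsFixedPt; decide)
    (hcover := by decide +kernel) (hadj := leaveAdj_blocks_iff)

end

/-- There is a 2-(24,4,1) packing with 42 blocks whose leave is a vertex-disjoint
union of cycles of lengths [3, 3, 3, 3, 3, 3, 6], covering all 24 points. -/
theorem exists_max_packing_with_leave_type :
    ∃ B : Finset (Finset (Fin 24)), IsPacking B ∧ B.card = 42 ∧
      LeaveIsCycleType B [3, 3, 3, 3, 3, 3, 6] :=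
  ⟨blocks, isPacking_blocks,
    isPacking_blocks.card_eq_of_leaveIsCycleType leaveIsCycleType_blocks (by decide),
    leaveIsCycleType_blocks⟩
end
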